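/- Let d ∈ {2,3}. There exists a constant C_d > 0 such that the following holds for all ε > 0. For i = 1, 2, let h_i ∈ L^∞(𝕋^d) be a probability density; let Ū_i ∈ C¹(𝕋^d) have zero mean and be a weak solution of ε² Δ Ū_i = h_i − 1 (i.e. ε² ∫ ∇Ū_i·∇φ dx = −∫ (h_i − 1)φ dx for all smooth φ); and let Û_i ∈ C²(𝕋^d) satisfy ε² Δ Û_i = e^{Ū_i + Û_i} − 1 pointwise. Then ∫_{𝕋^d} |∇Û_1 − ∇Û_2|² dx ≤ exp( exp[ C_d ε^{−2} ( 1 + max_i ‖h_i‖_{L^{(d+2)/d}(𝕋^d)} ) ] ) · max_i ‖h_i‖_{L^∞(𝕋^d)} · W₂²(h_1 dx, h_2 dx). -/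

import Mathlib

open MeasureTheory Real Set
open scoped ENNReal

noncomputable section

/-- The fundamental domain `[0,1)^d` of the flat torus `𝕋^d = ℝ^d/ℤ^d`. -/
def Tcube (d : ℕ) : Set (Fin d → ℝ) := Set.univ.pi fun _ => Set.Ico (0:ℝ) 1

/-- The Haar (Lebesgue) probability measure on the torus `𝕋^d`, realised as Lebesgue
measure restricted to the fundamental domain `[0,1)^d`. -/
def torusMeasure (d : ℕ) : Measure (Fin d → ℝ) := volume.restrict (Tcube d)

/-- The Euclidean norm on `ℝ^d`. -/
def euclNorm {d : ℕ} (v : Fin d → ℝ) : ℝ := Real.sqrt (∑ i, (v i) ^ 2)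

/-- The lattice vector in `ℝ^d` associated to `k ∈ ℤ^d`. -/
def latVec {d : ℕ} (k : Fin d → ℤ) : Fin d → ℝ := fun i => (k i : ℝ)

/-- `ℤ^d`-periodicity of a function on `ℝ^d`; such functions are exactly the functions
on the torus `𝕋^d`. -/
def ZPeriodic {d : ℕ} {α : Type*} (f : (Fin d → ℝ) → α) : Prop :=
  ∀ (x : Fin d → ℝ) (k : Fin d → ℤ), f (x + latVec k) = f x

/-- The quotient (flat) metric on the torus `𝕋^d`, expressed on representatives in `ℝ^d`. -/
def tdist {d : ℕ} (x y : Fin d → ℝ) : ℝ := ⨅ k : Fin d → ℤ, euclNorm (x - y + latVec k)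

/-- The gradient of a scalar function on `ℝ^d`, as an `ℝ^d`-valued function. -/
def grad {d : ℕ} (U : (Fin d → ℝ) → ℝ) (x : Fin d → ℝ) : Fin d → ℝ :=
  fun i => fderiv ℝ U x (Pi.single i 1)

/-- The Laplacian: the sum of the second partial derivatives. -/
def lap {d : ℕ} (U : (Fin d → ℝ) → ℝ) (x : Fin d → ℝ) : ℝ :=
  ∑ i, fderiv ℝ (fun y => fderiv ℝ U y (Pi.single i 1)) x (Pi.single i 1)

/-- The Hessian matrix of second partial derivatives. -/
def hess {d : ℕ} (U : (Fin d → ℝ) → ℝ) (x : Fin d → ℝ) : Fin d → Fin d → ℝ :=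
  fun i j => fderiv ℝ (fun y => fderiv ℝ U y (Pi.single j 1)) x (Pi.single i 1)

/-- Frobenius (Euclidean) norm of a `d × d` matrix. -/
def frobNorm {d : ℕ} (M : Fin d → Fin d → ℝ) : ℝ := Real.sqrt (∑ i, ∑ j, (M i j) ^ 2)

/-- Euclidean dot product on `ℝ^d`. -/
def dotP {d : ℕ} (v w : Fin d → ℝ) : ℝ := ∑ i, v i * w i

/-- `HolderBnd α u K` expresses that the Hölder norm `‖u‖_{C^{0,α}(𝕋^d)}`, i.e. the sup
norm plus the `α`-Hölder seminorm with respect to the torus metric, is at most `K`. -/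
def HolderBnd {d : ℕ} (α : ℝ) (u : (Fin d → ℝ) → ℝ) (K : ℝ) : Prop :=
  ∃ A B : ℝ, 0 ≤ A ∧ 0 ≤ B ∧ A + B ≤ K ∧ (∀ x, |u x| ≤ A) ∧
    ∀ x y, |u x - u y| ≤ B * tdist x y ^ α

/-- Hölder norm bound for an `ℝ^d`-valued function, with the Euclidean norm on values. -/
def HolderBndVec {d : ℕ} (α : ℝ) (G : (Fin d → ℝ) → Fin d → ℝ) (K : ℝ) : Prop :=
  ∃ A B : ℝ, 0 ≤ A ∧ 0 ≤ B ∧ A + B ≤ K ∧ (∀ x, euclNorm (G x) ≤ A) ∧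
    ∀ x y, euclNorm (G x - G y) ≤ B * tdist x y ^ α

/-- Hölder norm bound for a matrix-valued function. -/
def HolderBndMat {d : ℕ} (α : ℝ) (M : (Fin d → ℝ) → Fin d → Fin d → ℝ) (K : ℝ) : Prop :=
  ∃ A B : ℝ, 0 ≤ A ∧ 0 ≤ B ∧ A + B ≤ K ∧ (∀ x, frobNorm (M x) ≤ A) ∧
    ∀ x y, frobNorm (M x - M y) ≤ B * tdist x y ^ α

/-- `C1Bnd α u K` expresses `‖u‖_{C^{1,α}(𝕋^d)} ≤ K` (the `C^{0,α}` norm of `u` plus the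
`C^{0,α}` norm of its gradient is at most `K`). -/
def C1Bnd {d : ℕ} (α : ℝ) (u : (Fin d → ℝ) → ℝ) (K : ℝ) : Prop :=
  ∃ K₀ K₁ : ℝ, 0 ≤ K₀ ∧ 0 ≤ K₁ ∧ K₀ + K₁ ≤ K ∧
    HolderBnd α u K₀ ∧ HolderBndVec α (grad u) K₁

/-- `C2Bnd α u K` expresses that the second derivatives of `u` are `α`-Hölder continuous
and `‖u‖_{C^{2,α}(𝕋^d)} ≤ K`. -/
def C2Bnd {d : ℕ} (α : ℝ) (u : (Fin d → ℝ) → ℝ) (K : ℝ) : Prop :=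
  ∃ K₀ K₁ K₂ : ℝ, 0 ≤ K₀ ∧ 0 ≤ K₁ ∧ 0 ≤ K₂ ∧ K₀ + K₁ + K₂ ≤ K ∧
    HolderBnd α u K₀ ∧ HolderBndVec α (grad u) K₁ ∧ HolderBndMat α (hess u) K₂

/-- A coupling of two measures: a measure on the product whose marginals are `μ` and `ν`. -/
def IsCoupling {X : Type*} [MeasurableSpace X] (cpl : Measure (X × X)) (μ ν : Measure X) : Prop :=
  cpl.map Prod.fst = μ ∧ cpl.map Prod.snd = ν

/-- `W_q^q`: the `q`-th power of the Wasserstein distance of order `q` on the torus,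
defined as the infimum over couplings of the integral of the `q`-th power of the torus
distance. -/
def WassPow {d : ℕ} (q : ℝ) (μ ν : Measure (Fin d → ℝ)) : ℝ :=
  sInf { c | ∃ cpl : Measure ((Fin d → ℝ) × (Fin d → ℝ)), IsProbabilityMeasure cpl ∧
    IsCoupling cpl μ ν ∧ c = ∫ z, tdist z.1 z.2 ^ q ∂cpl }

/-- The Wasserstein distance of order `p` on the torus. -/
def Wass {d : ℕ} (p : ℝ) (μ ν : Measure (Fin d → ℝ)) : ℝ :=
  sInf { c | ∃ cpl : Measure ((Fin d → ℝ) × (Fin d → ℝ)), IsProbabilityMeasure cpl ∧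
    IsCoupling cpl μ ν ∧ c = (∫ z, tdist z.1 z.2 ^ p ∂cpl) ^ (1/p) }

/-- The measure `h dx` on the torus associated to a density `h`. -/
def densMeasure {d : ℕ} (h : (Fin d → ℝ) → ℝ) : Measure (Fin d → ℝ) :=
  (torusMeasure d).withDensity fun x => ENNReal.ofReal (h x)

/-- The `L^p(𝕋^d)` norm (as a real number). -/
def LpNorm {d : ℕ} (p : ℝ≥0∞) (u : (Fin d → ℝ) → ℝ) : ℝ :=
  (eLpNorm u p (torusMeasure d)).toReal

/-- `U` is a weak solution of `ε² Δ U = g` on the torus: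
`ε² ∫ ∇U·∇φ dx = −∫ g φ dx` for every smooth (periodic) test function `φ`. -/
def IsWeakPoisson {d : ℕ} (ε : ℝ) (U g : (Fin d → ℝ) → ℝ) : Prop :=
  ∀ φ : (Fin d → ℝ) → ℝ, ContDiff ℝ (⊤ : ℕ∞) φ → ZPeriodic φ →
    ε ^ 2 * ∫ x, dotP (grad U x) (grad φ x) ∂(torusMeasure d) =
      - ∫ x, g x * φ x ∂(torusMeasure d)

end
noncomputable section

/-- The rescaled mollifier `χ_r(x) = r^{-d} χ(x/r)` on `ℝ^d`. -/
def scaledMollifier {d : ℕ} (χ : (Fin d → ℝ) → ℝ) (r : ℝ) (x : Fin d → ℝ) : ℝ :=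
  (r ^ d)⁻¹ * χ (fun i => x i / r)

/-- The `ℤ^d`-periodisation of a function on `ℝ^d`, giving a function on the torus. -/
def periodised {d : ℕ} (g : (Fin d → ℝ) → ℝ) (x : Fin d → ℝ) : ℝ :=
  ∑' k : Fin d → ℤ, g (x + latVec k)

/-- The measure `χ_r ∗ μ` on the torus: the measure with density
`x ↦ ∫ χ_r(x − y) dμ(y)` with respect to the Haar measure (with `χ_r` periodised). -/
def mollifyMeasure {d : ℕ} (χ : (Fin d → ℝ) → ℝ) (r : ℝ) (μ : Measure (Fin d → ℝ)) :
    Measure (Fin d → ℝ) :=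
  (torusMeasure d).withDensity fun x =>
    ENNReal.ofReal (∫ y, periodised (scaledMollifier χ r) (x - y) ∂μ)

/-- A Borel probability measure on the torus `𝕋^d`, realised as a probability measure on
`ℝ^d` carried by the fundamental domain. -/
def IsTorusProb {d : ℕ} (μ : Measure (Fin d → ℝ)) : Prop :=
  IsProbabilityMeasure μ ∧ μ (Tcube d)ᶜ = 0

/-- The set `A_d` of allowed Hölder exponents: `(0,1)` if `d = 2`, `(0,1/5]` if `d = 3`. -/
def Aset (d : ℕ) : Set ℝ := if d = 2 then Set.Ioo 0 1 else Set.Ioc 0 (1/5)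

end

/-!
The potential `Ū = Ū₂ - Ū₁` is itself an admissible test function for both weak equations, after a
mollification that extends them from smooth to `C¹` test functions. Subtracting the two equations
gives, for every coupling `κ` of `h₁ dx` and `h₂ dx`,
`ε² ∫ |∇Ū|² dx = ∫ (h₁ - h₂) Ū dx = ∫ (Ū(x) - Ū(y)) dκ(x, y)`.
By Hajłasz's pointwise inequality `|Ū(x) - Ū(y)| ≤ 2 d(x, y) (M|∇Ū|(x) + M|∇Ū|(y))`, where `M` is
the Hardy–Littlewood maximal operator, the Cauchy–Schwarz inequality bounds the right-hand side by
`(∫ d² dκ)^(1/2)` times the `L²(h₁ dx)` and `L²(h₂ dx)` norms of `M|∇Ū|`. As `M` is bounded on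
`L²(𝕋^d)`, these are at most a constant times `max ‖hᵢ‖_∞^(1/2) ‖∇Ū‖_{L²}`, so that
`∫ |∇Ū|² dx ≤ K ε⁻⁴ max ‖hᵢ‖_∞ W₂²(h₁ dx, h₂ dx)`.

Testing the equation for `V̂ = Û₁ - Û₂` with `V̂ - Ū = (Ū₁ + Û₁) - (Ū₂ + Û₂)`, the monotonicity of
the exponential gives `∫ ∇V̂ · ∇(V̂ - Ū) dx ≤ 0`, hence `‖∇V̂‖_{L²} ≤ ‖∇Ū‖_{L²}`. Finally `K ε⁻⁴` is
at most a quadratic polynomial in `ε⁻²`, which the double exponential absorbs.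
-/

lemma lintegral_Ioo_zero_mul_rpow {p : ℝ} (hp : 0 < p) {b : ℝ} (hb : 0 ≤ b) :
    ∫⁻ t in Ioo 0 b, ENNReal.ofReal (p * t ^ (p - 1)) = ENNReal.ofReal b ^ p := by
  have hint : IntervalIntegrable (fun t : ℝ => t ^ (p - 1)) volume 0 b :=
    intervalIntegral.intervalIntegrable_rpow' (by linarith)
  have hintegral : ∫ t in Ioo 0 b, p * t ^ (p - 1) = b ^ p := by
    rw [← integral_Ioc_eq_integral_Ioo, ← intervalIntegral.integral_of_le hb,
      intervalIntegral.integral_const_mul, integral_rpow (Or.inl (by linarith)), sub_add_cancel,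
      zero_rpow hp.ne', sub_zero, mul_div_cancel₀ _ hp.ne']
  rw [ENNReal.ofReal_rpow_of_nonneg hb hp.le, ← hintegral, ofReal_integral_eq_lintegral_ofReal]
  · exact (((intervalIntegrable_iff_integrableOn_Ioo_of_le hb).1 hint).const_mul p)
  · filter_upwards [ae_restrict_mem measurableSet_Ioo] with t ht
    exact mul_nonneg hp.le (rpow_nonneg ht.1.le _)

lemma lintegral_Ioi_zero_mul_rpow {p : ℝ} (hp : 0 < p) :
    ∫⁻ t in Ioi 0, ENNReal.ofReal (p * t ^ (p - 1)) = ∞ := by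
  refine ENNReal.eq_top_of_forall_nnreal_le fun r => ?_
  have hr : (r : ℝ≥0∞) = ENNReal.ofReal ((r : ℝ) ^ p⁻¹) ^ p := by
    rw [ENNReal.ofReal_rpow_of_nonneg (by positivity) hp.le, Real.rpow_inv_rpow r.coe_nonneg hp.ne',
      ENNReal.ofReal_coe_nnreal]
  rw [hr, ← lintegral_Ioo_zero_mul_rpow hp (by positivity)]
  exact lintegral_mono_set Ioo_subset_Ioi_self

lemma lintegral_mul_rpow_indicator_lt (a : ℝ≥0∞) {p : ℝ} (hp : 0 < p) :
    ∫⁻ t in Ioi 0, {t | ENNReal.ofReal t < a}.indicator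
      (fun t => ENNReal.ofReal (p * t ^ (p - 1))) t = a ^ p := by
  rw [setLIntegral_indicator (measurableSet_lt ENNReal.measurable_ofReal measurable_const)]
  by_cases ha : a = ∞
  · simp [ha, lintegral_Ioi_zero_mul_rpow hp, hp]
  · have hset : {t | ENNReal.ofReal t < a} ∩ Ioi 0 = Ioo 0 a.toReal := by
      ext t
      simp only [mem_inter_iff, mem_ofPred_eq, mem_Ioi, mem_Ioo, and_comm (a := _ < a)]
      exact and_congr_right fun ht => ENNReal.ofReal_lt_iff_lt_toReal ht.le ha
    rw [hset, lintegral_Ioo_zero_mul_rpow hp ENNReal.toReal_nonneg, ENNReal.ofReal_toReal ha]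

lemma lintegral_rpow_eq_lintegral_mul_measure_lt {α : Type*} [MeasurableSpace α] (μ : Measure α)
    [SFinite μ] {g : α → ℝ≥0∞} (hg : Measurable g) {p : ℝ} (hp : 0 < p) :
    ∫⁻ x, g x ^ p ∂μ =
      ∫⁻ t in Ioi 0, ENNReal.ofReal (p * t ^ (p - 1)) * μ {x | ENNReal.ofReal t < g x} := by
  have hlt : MeasurableSet {q : ℝ × α | ENNReal.ofReal q.1 < g q.2} :=
    measurableSet_lt (by fun_prop) (by fun_prop)
  have hmeas : Measurable fun q : ℝ × α => {q : ℝ × α | ENNReal.ofReal q.1 < g q.2}.indicator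
      (fun q => ENNReal.ofReal (p * q.1 ^ (p - 1))) q :=
    Measurable.indicator (by fun_prop) hlt
  calc ∫⁻ x, g x ^ p ∂μ
      = ∫⁻ x, (∫⁻ t in Ioi 0, {q : ℝ × α | ENNReal.ofReal q.1 < g q.2}.indicator
          (fun q => ENNReal.ofReal (p * q.1 ^ (p - 1))) (t, x)) ∂μ :=
        lintegral_congr fun x => (lintegral_mul_rpow_indicator_lt (g x) hp).symm
    _ = ∫⁻ t in Ioi 0, (∫⁻ x, {x | ENNReal.ofReal t < g x}.indicator
          (fun _ => ENNReal.ofReal (p * t ^ (p - 1))) x ∂μ) :=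
        lintegral_lintegral_swap (hmeas.comp measurable_swap).aemeasurable
    _ = _ := lintegral_congr fun t =>
        lintegral_indicator_const (measurableSet_lt measurable_const hg) _

lemma enorm_sub_le_mul_lintegral_enorm_fderiv {E F : Type*} [NormedAddCommGroup E]
    [NormedSpace ℝ E] [NormedAddCommGroup F] [NormedSpace ℝ F] {u : E → F} (hu : ContDiff ℝ 1 u)
    (x z : E) :
    ‖u z - u x‖ₑ ≤
      ‖z - x‖ₑ * ∫⁻ t in Ioc (0 : ℝ) 1, ‖fderiv ℝ u (AffineMap.lineMap x z t)‖ₑ := by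
  have hderiv : ∀ t : ℝ, HasDerivAt (fun t : ℝ => u (AffineMap.lineMap x z t))
      (fderiv ℝ u (AffineMap.lineMap x z t) (z - x)) t := fun t =>
    (hu.differentiable one_ne_zero _).hasFDerivAt.comp_hasDerivAt t AffineMap.hasDerivAt_lineMap
  have hline : ContDiff ℝ 1 fun t : ℝ => u (AffineMap.lineMap x z t) :=
    hu.comp (AffineMap.contDiff_lineMap x z)
  have hftc := enorm_sub_le_lintegral_deriv_of_contDiffOn_Icc hline.contDiffOn zero_le_one
  simp only [AffineMap.lineMap_apply_one, AffineMap.lineMap_apply_zero,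
    fun t => (hderiv t).deriv] at hftc
  rw [← lintegral_const_mul' _ _ enorm_ne_top, restrict_Ioc_eq_restrict_Icc]
  refine hftc.trans (lintegral_mono fun t => ?_)
  rw [mul_comm]
  exact ContinuousLinearMap.le_opENorm _ _

section MaximalFunction

variable {E : Type*} [NormedAddCommGroup E] [MeasurableSpace E]

/-- The uncentred Hardy–Littlewood maximal function truncated at scale `R`: the supremum of the
averages of `f` over the open balls of radius at most `R` that contain `x`. -/
noncomputable def maximalFunction (μ : Measure E) (R : ℝ) (f : E → ℝ≥0∞) (x : E) : ℝ≥0∞ :=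
  ⨆ (c : E) (r : ℝ) (_ : x ∈ Metric.ball c r) (_ : r ≤ R), ⨍⁻ y in Metric.ball c r, f y ∂μ

variable {μ : Measure E} {R : ℝ} {f g : E → ℝ≥0∞} {x : E}

lemma laverage_ball_le_maximalFunction {c : E} {r : ℝ} (hx : x ∈ Metric.ball c r) (hr : r ≤ R) :
    ⨍⁻ y in Metric.ball c r, f y ∂μ ≤ maximalFunction μ R f x :=
  le_iSup₂_of_le c r <| le_iSup₂_of_le hx hr le_rfl

lemma lt_maximalFunction_iff {s : ℝ≥0∞} :
    s < maximalFunction μ R f x ↔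
      ∃ c r, x ∈ Metric.ball c r ∧ r ≤ R ∧ s < ⨍⁻ y in Metric.ball c r, f y ∂μ := by
  simp only [maximalFunction, lt_iSup_iff, exists_prop]

lemma measurable_maximalFunction [BorelSpace E] : Measurable (maximalFunction μ R f) := by
  refine measurable_of_Ioi fun s => IsOpen.measurableSet ?_
  refine Metric.isOpen_iff.2 fun x hx => ?_
  obtain ⟨c, r, hxr, hrR, hs⟩ := lt_maximalFunction_iff.1 hx
  obtain ⟨δ, hδ, hball⟩ := Metric.isOpen_iff.1 Metric.isOpen_ball x hxr
  exact ⟨δ, hδ, fun y hy => lt_maximalFunction_iff.2 ⟨c, r, hball hy, hrR, hs⟩⟩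

lemma maximalFunction_congr [OpensMeasurableSpace E]
    (h : EqOn f g (Metric.ball x (2 * R))) :
    maximalFunction μ R f x = maximalFunction μ R g x := by
  refine iSup_congr fun c => iSup_congr fun r => iSup_congr fun hx => iSup_congr fun hr =>
    setLAverage_congr_fun measurableSet_ball fun y hy => h ?_
  rw [Metric.mem_ball] at hx hy ⊢
  linarith [dist_triangle_right y x c]

lemma maximalFunction_comp_add_right [BorelSpace E] [μ.IsAddRightInvariant] (v x : E) :
    maximalFunction μ R (fun y => f (y + v)) x = maximalFunction μ R f (x + v) := by
  refine (add_right_surjective v).iSup_congr (· + v) fun c => ?_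
  have haverage (r : ℝ) : ⨍⁻ y in Metric.ball c r, f (y + v) ∂μ =
      ⨍⁻ y in Metric.ball (c + v) r, f y ∂μ := by
    have hpre : Metric.ball c r = (· + v) ⁻¹' Metric.ball (c + v) r := by
      ext y
      simp only [mem_preimage, Metric.mem_ball, dist_add_right]
    rw [setLAverage_eq, setLAverage_eq, hpre, measure_preimage_add_right,
      (measurePreserving_add_right μ v).setLIntegral_comp_preimage_emb
        (measurableEmbedding_addRight v)]
  simp only [Metric.mem_ball, dist_add_right, haverage]

lemma half_lt_maximalFunction_of_le_add_half [ProperSpace E] [μ.IsOpenPosMeasure]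
    [IsFiniteMeasureOnCompacts μ] {s : ℝ≥0∞} (hs : s < maximalFunction μ R f x)
    (hle : ∀ y, f y ≤ g y + s / 2) : s / 2 < maximalFunction μ R g x := by
  obtain ⟨c, r, hxr, hrR, hlt⟩ := lt_maximalFunction_iff.1 hs
  refine lt_maximalFunction_iff.2 ⟨c, r, hxr, hrR, ?_⟩
  by_contra! hsmall
  have hball := (Metric.measure_ball_pos μ c (Metric.pos_of_mem_ball hxr)).ne'
  refine hlt.not_ge ?_
  calc ⨍⁻ y in Metric.ball c r, f y ∂μ
      ≤ ⨍⁻ y in Metric.ball c r, (g y + s / 2) ∂μ := lintegral_mono hle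
    _ = (⨍⁻ y in Metric.ball c r, g y ∂μ) + ⨍⁻ _ in Metric.ball c r, s / 2 ∂μ :=
        lintegral_add_right _ measurable_const
    _ ≤ s / 2 + s / 2 := by
        rw [setLAverage_const hball measure_ball_lt_top.ne]
        gcongr
    _ = s := ENNReal.add_halves s

variable [NormedSpace ℝ E] [FiniteDimensional ℝ E] [BorelSpace E] [μ.IsAddHaarMeasure]

lemma mul_measure_closedBall_four_mul_le {s : ℝ≥0∞} {c : E} {r : ℝ} (hr : 0 < r)
    (hs : s < ⨍⁻ y in Metric.ball c r, f y ∂μ) :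
    s * μ (Metric.closedBall c (4 * r)) ≤
      4 ^ Module.finrank ℝ E * ∫⁻ y in Metric.ball c r, f y ∂μ := by
  have hvol : μ (Metric.closedBall c (4 * r)) =
      4 ^ Module.finrank ℝ E * μ (Metric.ball c r) := by
    rw [Measure.addHaar_closedBall μ c (by positivity), Measure.addHaar_ball_of_pos μ c hr,
      mul_pow, ENNReal.ofReal_mul (by positivity), mul_assoc, ENNReal.ofReal_pow (by norm_num)]
    norm_num
  rw [hvol, mul_left_comm]
  gcongr
  rw [← ENNReal.le_div_iff_mul_le (Or.inl (Metric.measure_ball_pos μ c hr).ne')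
    (Or.inl measure_ball_lt_top.ne), ← setLAverage_eq]
  exact hs.le

lemma mul_measure_lt_maximalFunction_le (s : ℝ≥0∞) :
    s * μ {x | s < maximalFunction μ R f x} ≤ 4 ^ Module.finrank ℝ E * ∫⁻ x, f x ∂μ := by
  set t : Set (E × ℝ) := {q | 0 < q.2 ∧ q.2 ≤ R ∧ s < ⨍⁻ y in Metric.ball q.1 q.2, f y ∂μ}
  obtain ⟨u, hut, hdisj, hcover⟩ := Vitali.exists_disjoint_subfamily_covering_enlargement_closedBall
    t Prod.fst Prod.snd R (fun q hq => hq.2.1) 4 (by norm_num)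
  have hdisj_ball : u.PairwiseDisjoint fun q => Metric.ball q.1 q.2 :=
    hdisj.mono fun q => Metric.ball_subset_closedBall
  have hu : u.Countable := hdisj_ball.countable_of_nonempty_interior fun q hq => by
    rw [Metric.isOpen_ball.interior_eq]
    exact Metric.nonempty_ball.2 (hut hq).1
  have hsubset : {x | s < maximalFunction μ R f x} ⊆
      ⋃ q ∈ u, Metric.closedBall q.1 (4 * q.2) := fun x hx => by
    obtain ⟨c, r, hxr, hrR, hs⟩ := lt_maximalFunction_iff.1 hx
    obtain ⟨q, hq, hsub⟩ := hcover (c, r) ⟨Metric.pos_of_mem_ball hxr, hrR, hs⟩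
    exact mem_biUnion hq (hsub (Metric.ball_subset_closedBall hxr))
  calc s * μ {x | s < maximalFunction μ R f x}
      ≤ s * ∑' q : u, μ (Metric.closedBall q.1.1 (4 * q.1.2)) := by
        gcongr
        exact (measure_mono hsubset).trans (measure_biUnion_le μ hu _)
    _ ≤ ∑' q : u, 4 ^ Module.finrank ℝ E * ∫⁻ y in Metric.ball q.1.1 q.1.2, f y ∂μ := by
        rw [← ENNReal.tsum_mul_left]
        exact ENNReal.tsum_le_tsum fun q =>
          mul_measure_closedBall_four_mul_le (hut q.2).1 (hut q.2).2.2
    _ = 4 ^ Module.finrank ℝ E * ∫⁻ y in ⋃ q ∈ u, Metric.ball q.1 q.2, f y ∂μ := by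
        rw [ENNReal.tsum_mul_left,
          lintegral_biUnion hu (fun q _ => Metric.isOpen_ball.measurableSet) hdisj_ball]
    _ ≤ 4 ^ Module.finrank ℝ E * ∫⁻ x, f x ∂μ := by
        gcongr
        exact Measure.restrict_le_self

/-- The part of `f` below `s / 2` contributes at most `s / 2` to the averages, so the weak bound may
be applied to the part of `f` above `s / 2`. -/
lemma mul_measure_lt_maximalFunction_le_withDensity (hf : Measurable f) (s : ℝ≥0∞) :
    s * μ {x | s < maximalFunction μ R f x} ≤
      4 ^ Module.finrank ℝ E * 2 * μ.withDensity f {x | s < 2 * f x} := by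
  set f' : E → ℝ≥0∞ := {x | s < 2 * f x}.indicator f
  have hle : ∀ y, f y ≤ f' y + s / 2 := fun y => by
    by_cases hy : s < 2 * f y
    · simp [f', hy]
    · refine le_add_of_nonneg_of_le zero_le ?_
      rw [ENNReal.le_div_iff_mul_le (Or.inl two_ne_zero) (Or.inl ENNReal.ofNat_ne_top), mul_comm]
      exact not_lt.1 hy
  have hsubset : {x | s < maximalFunction μ R f x} ⊆ {x | s / 2 < maximalFunction μ R f' x} :=
    fun x hx => half_lt_maximalFunction_of_le_add_half hx hle
  have hmeas : MeasurableSet {x | s < 2 * f x} := measurableSet_lt measurable_const (by fun_prop)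
  calc s * μ {x | s < maximalFunction μ R f x}
      ≤ 2 * (s / 2 * μ {x | s / 2 < maximalFunction μ R f' x}) := by
        rw [← mul_assoc, ENNReal.mul_div_cancel two_ne_zero ENNReal.ofNat_ne_top]
        gcongr
    _ ≤ 2 * (4 ^ Module.finrank ℝ E * ∫⁻ x, f' x ∂μ) :=
        mul_le_mul_right (mul_measure_lt_maximalFunction_le (s / 2)) 2
    _ = 4 ^ Module.finrank ℝ E * 2 * μ.withDensity f {x | s < 2 * f x} := by
        rw [lintegral_indicator hmeas, withDensity_apply f hmeas]
        ring

lemma mul_rpow_mul_measure_lt_maximalFunction_le (hf : Measurable f) {p : ℝ} (hp : 1 < p) {t : ℝ}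
    (ht : 0 < t) :
    ENNReal.ofReal (p * t ^ (p - 1)) * μ {x | ENNReal.ofReal t < maximalFunction μ R f x} ≤
      4 ^ Module.finrank ℝ E * 2 * ENNReal.ofReal (p / (p - 1)) *
        (ENNReal.ofReal ((p - 1) * t ^ (p - 1 - 1)) *
          μ.withDensity f {x | ENNReal.ofReal t < 2 * f x}) := by
  have hp' : 0 < p - 1 := by linarith
  have hpow : ENNReal.ofReal (p * t ^ (p - 1)) = ENNReal.ofReal (p / (p - 1)) *
      ENNReal.ofReal ((p - 1) * t ^ (p - 1 - 1)) * ENNReal.ofReal t := by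
    rw [← ENNReal.ofReal_mul (by positivity), ← ENNReal.ofReal_mul (by positivity),
      rpow_sub_one ht.ne' (p - 1)]
    congr 1
    field_simp
  rw [hpow, mul_assoc]
  refine (mul_le_mul_right (mul_measure_lt_maximalFunction_le_withDensity hf _) _).trans_eq ?_
  ring

lemma lintegral_maximalFunction_rpow_le (hf : Measurable f) {p : ℝ} (hp : 1 < p) :
    ∫⁻ x, maximalFunction μ R f x ^ p ∂μ ≤
      4 ^ Module.finrank ℝ E * 2 ^ p * ENNReal.ofReal (p / (p - 1)) * ∫⁻ x, f x ^ p ∂μ := by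
  have hp' : 0 < p - 1 := by linarith
  set C : ℝ≥0∞ := 4 ^ Module.finrank ℝ E * 2 * ENNReal.ofReal (p / (p - 1)) with hC
  have hsplit : ∀ a : ℝ≥0∞, a ^ p = a * a ^ (p - 1) := fun a => by
    conv_lhs => rw [← add_sub_cancel 1 p, ENNReal.rpow_add_of_nonneg _ _ zero_le_one hp'.le,
      ENNReal.rpow_one]
  calc ∫⁻ x, maximalFunction μ R f x ^ p ∂μ
      = ∫⁻ t in Ioi 0, ENNReal.ofReal (p * t ^ (p - 1)) *
          μ {x | ENNReal.ofReal t < maximalFunction μ R f x} :=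
        lintegral_rpow_eq_lintegral_mul_measure_lt μ measurable_maximalFunction (by linarith)
    _ ≤ C * ∫⁻ t in Ioi 0, ENNReal.ofReal ((p - 1) * t ^ (p - 1 - 1)) *
          μ.withDensity f {x | ENNReal.ofReal t < 2 * f x} := by
        refine (setLIntegral_mono' measurableSet_Ioi fun t ht =>
          mul_rpow_mul_measure_lt_maximalFunction_le hf hp ht).trans_eq ?_
        exact lintegral_const_mul' _ _ (by finiteness)
    _ = C * ∫⁻ x, f x * (2 * f x) ^ (p - 1) ∂μ := by
        rw [← lintegral_rpow_eq_lintegral_mul_measure_lt (μ.withDensity f) (hf.const_mul 2) hp',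
          lintegral_withDensity_eq_lintegral_mul _ hf (by fun_prop)]
        rfl
    _ = 4 ^ Module.finrank ℝ E * 2 ^ p * ENNReal.ofReal (p / (p - 1)) * ∫⁻ x, f x ^ p ∂μ := by
        simp only [hsplit, ENNReal.mul_rpow_of_nonneg _ _ hp'.le, mul_left_comm (f _)]
        rw [lintegral_const_mul _ (by fun_prop), hC]
        ring

lemma map_lineMap_addHaar (x : E) {t : ℝ} (ht : t ≠ 0) :
    μ.map (fun z => AffineMap.lineMap x z t) =
      ENNReal.ofReal |(t ^ Module.finrank ℝ E)⁻¹| • μ := by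
  have hcomp : (fun z => AffineMap.lineMap x z t) = (· + (x - t • x)) ∘ (t • · : E → E) := by
    funext z
    simp only [AffineMap.lineMap_apply_module', Function.comp_apply, smul_sub]
    abel
  rw [hcomp, ← Measure.map_map (by fun_prop) (by fun_prop), Measure.map_addHaar_smul μ ht,
    Measure.map_smul, map_add_right_eq_self]

lemma setLAverage_ball_comp_lineMap (hf : Measurable f) (x c : E) (r : ℝ) {t : ℝ} (ht : 0 < t) :
    ⨍⁻ z in Metric.ball c r, f (AffineMap.lineMap x z t) ∂μ =
      ⨍⁻ y in Metric.ball (AffineMap.lineMap x c t) (t * r), f y ∂μ := by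
  set T : E → E := fun z => AffineMap.lineMap x z t
  have hT : Measurable T := Continuous.measurable (by fun_prop)
  have hpre : Metric.ball c r = T ⁻¹' Metric.ball (T c) (t * r) := by
    ext z
    simp [T, AffineMap.lineMap_apply_module', dist_eq_norm, ← smul_sub, norm_smul, abs_of_pos ht,
      ht]
  have hscale : ENNReal.ofReal |(t ^ Module.finrank ℝ E)⁻¹| ≠ 0 := by
    simpa using pow_pos (abs_pos.2 ht.ne') _
  rw [setLAverage_eq, setLAverage_eq, hpre, ← Measure.map_apply hT measurableSet_ball,
    ← setLIntegral_map measurableSet_ball hf hT, map_lineMap_addHaar x ht.ne',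
    Measure.restrict_smul, lintegral_smul_measure, Measure.smul_apply, smul_eq_mul, smul_eq_mul,
    ENNReal.mul_div_mul_left _ _ hscale ENNReal.ofReal_ne_top]

lemma setLAverage_comp_lineMap_le_maximalFunction (hf : Measurable f) {c : E} {r : ℝ}
    (hx : x ∈ Metric.ball c r) (hr : r ≤ R) {t : ℝ} (ht : t ∈ Ioc (0 : ℝ) 1) :
    ⨍⁻ z in Metric.ball c r, f (AffineMap.lineMap x z t) ∂μ ≤ maximalFunction μ R f x := by
  rw [setLAverage_ball_comp_lineMap hf x c r ht.1]
  refine laverage_ball_le_maximalFunction ?_ ?_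
  · rw [Metric.mem_ball, dist_comm, dist_lineMap_left, Real.norm_of_nonneg ht.1.le]
    exact mul_lt_mul_of_pos_left hx ht.1
  · exact (mul_le_of_le_one_left (Metric.pos_of_mem_ball hx).le ht.2).trans hr

variable {F : Type*} [NormedAddCommGroup F] [NormedSpace ℝ F] {u : E → F}

lemma setLAverage_enorm_sub_le_maximalFunction (hu : ContDiff ℝ 1 u) {c : E} {r : ℝ}
    (hx : x ∈ Metric.ball c r) (hr : r ≤ R) :
    ⨍⁻ z in Metric.ball c r, ‖u z - u x‖ₑ ∂μ ≤
      ENNReal.ofReal (2 * r) * maximalFunction μ R (fun y => ‖fderiv ℝ u y‖ₑ) x := by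
  have hfderiv : Continuous fun y => ‖fderiv ℝ u y‖ₑ := (hu.continuous_fderiv one_ne_zero).enorm
  calc ⨍⁻ z in Metric.ball c r, ‖u z - u x‖ₑ ∂μ
      ≤ ⨍⁻ z in Metric.ball c r, ENNReal.ofReal (2 * r) *
          (∫⁻ t in Ioc (0 : ℝ) 1, ‖fderiv ℝ u (AffineMap.lineMap x z t)‖ₑ) ∂μ := by
        simp only [laverage, Measure.restrict_apply_univ]
        refine lintegral_mono_ae (Measure.smul_absolutelyContinuous.ae_le ?_)
        filter_upwards [ae_restrict_mem measurableSet_ball] with z hz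
        refine (enorm_sub_le_mul_lintegral_enorm_fderiv hu x z).trans ?_
        gcongr
        rw [← ofReal_norm, ← dist_eq_norm]
        refine ENNReal.ofReal_le_ofReal ?_
        linarith [dist_triangle_right z x c, Metric.mem_ball.1 hx, Metric.mem_ball.1 hz]
    _ = ENNReal.ofReal (2 * r) * ∫⁻ t in Ioc (0 : ℝ) 1,
          (⨍⁻ z in Metric.ball c r, ‖fderiv ℝ u (AffineMap.lineMap x z t)‖ₑ ∂μ) := by
        simp only [laverage]
        rw [lintegral_const_mul' _ _ ENNReal.ofReal_ne_top, lintegral_lintegral_swap]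
        refine (hfderiv.measurable.comp ?_).aemeasurable
        exact Continuous.measurable (by fun_prop)
    _ ≤ ENNReal.ofReal (2 * r) * ∫⁻ _ in Ioc (0 : ℝ) 1,
          maximalFunction μ R (fun y => ‖fderiv ℝ u y‖ₑ) x := by
        gcongr 1
        exact setLIntegral_mono' measurableSet_Ioc fun t ht =>
          setLAverage_comp_lineMap_le_maximalFunction hfderiv.measurable hx hr ht
    _ = ENNReal.ofReal (2 * r) * maximalFunction μ R (fun y => ‖fderiv ℝ u y‖ₑ) x := by simp

lemma enorm_sub_le_maximalFunction_add (hu : ContDiff ℝ 1 u) {y : E} (hxy : ‖x - y‖ ≤ R) :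
    ‖u x - u y‖ₑ ≤ 2 * ‖x - y‖ₑ * (maximalFunction μ R (fun y => ‖fderiv ℝ u y‖ₑ) x +
      maximalFunction μ R (fun y => ‖fderiv ℝ u y‖ₑ) y) := by
  rcases eq_or_ne x y with rfl | hne
  · simp
  set B := Metric.ball (midpoint ℝ x y) ‖x - y‖
  have hdist : 0 < ‖x - y‖ := norm_pos_iff.2 (sub_ne_zero.2 hne)
  have hx : x ∈ B := by
    rw [Metric.mem_ball, dist_comm, dist_midpoint_left, dist_eq_norm, Real.norm_ofNat]
    linarith
  have hy : y ∈ B := by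
    rw [Metric.mem_ball, dist_comm, dist_midpoint_right, dist_eq_norm, Real.norm_ofNat]
    linarith
  have hB : μ B ≠ 0 := (Metric.measure_ball_pos μ _ hdist).ne'
  calc ‖u x - u y‖ₑ = ⨍⁻ _ in B, ‖u x - u y‖ₑ ∂μ :=
        (setLAverage_const hB measure_ball_lt_top.ne _).symm
    _ ≤ ⨍⁻ z in B, (‖u z - u x‖ₑ + ‖u z - u y‖ₑ) ∂μ := by
        refine lintegral_mono fun z => ?_
        simpa only [edist_eq_enorm_sub] using edist_triangle_left (u x) (u y) (u z)
    _ = (⨍⁻ z in B, ‖u z - u x‖ₑ ∂μ) + ⨍⁻ z in B, ‖u z - u y‖ₑ ∂μ :=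
        lintegral_add_left (hu.continuous.sub continuous_const).enorm.measurable _
    _ ≤ _ := by
        rw [mul_add, ← ofReal_norm, ← ENNReal.ofReal_ofNat 2, ← ENNReal.ofReal_mul zero_le_two]
        exact add_le_add (setLAverage_enorm_sub_le_maximalFunction hu hx hxy)
          (setLAverage_enorm_sub_le_maximalFunction hu hy hxy)

end MaximalFunction

section Torus

variable {d : ℕ}

lemma volume_Tcube : volume (Tcube d) = 1 := by
  simp [Tcube, Real.volume_pi_Ico]

lemma measurableSet_Tcube : MeasurableSet (Tcube d) :=
  MeasurableSet.univ_pi fun _ => measurableSet_Ico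

instance : IsProbabilityMeasure (torusMeasure d) :=
  ⟨by rw [torusMeasure, Measure.restrict_apply_univ, volume_Tcube]⟩

lemma add_latVec_neg_floor_mem_Tcube (x : Fin d → ℝ) : x + latVec (fun i => -⌊x i⌋) ∈ Tcube d := by
  intro i _
  simp only [latVec, Pi.add_apply, Int.cast_neg, ← sub_eq_add_neg]
  exact ⟨Int.fract_nonneg _, Int.fract_lt_one _⟩

lemma torusMeasure_eq_restrict_Icc :
    torusMeasure d = volume.restrict (Icc (0 : Fin d → ℝ) 1) :=
  Measure.restrict_congr_set Measure.univ_pi_Ico_ae_eq_Icc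

section ZPeriodic

variable {α β γ E : Type*} [NormedAddCommGroup E]

lemma ZPeriodic.comp {f : (Fin d → ℝ) → α} (hf : ZPeriodic f) (φ : α → β) :
    ZPeriodic fun x => φ (f x) := fun x k => congrArg φ (hf x k)

lemma ZPeriodic.comp₂ {f : (Fin d → ℝ) → α} {g : (Fin d → ℝ) → β} (hf : ZPeriodic f)
    (hg : ZPeriodic g) (φ : α → β → γ) : ZPeriodic fun x => φ (f x) (g x) :=
  fun x k => congrArg₂ φ (hf x k) (hg x k)

lemma ZPeriodic.sub [Sub α] {f g : (Fin d → ℝ) → α} (hf : ZPeriodic f) (hg : ZPeriodic g) :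
    ZPeriodic (f - g) :=
  hf.comp₂ hg (· - ·)

lemma ZPeriodic.fderiv [NormedSpace ℝ E] {f : (Fin d → ℝ) → E} (hf : ZPeriodic f) :
    ZPeriodic (fderiv ℝ f) := fun x k => by
  rw [← fderiv_comp_add_right]
  exact congrArg (fun g => _root_.fderiv ℝ g x) (funext fun y => hf y k)

lemma ZPeriodic.grad {f : (Fin d → ℝ) → ℝ} (hf : ZPeriodic f) : ZPeriodic (grad f) :=
  hf.fderiv.comp fun L i => L (Pi.single i 1)

lemma ZPeriodic.exists_norm_le {f : (Fin d → ℝ) → E} (hf : ZPeriodic f) (hc : Continuous f) :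
    ∃ B, ∀ x, ‖f x‖ ≤ B := by
  obtain ⟨B, hB⟩ := (isCompact_Icc (a := (0 : Fin d → ℝ)) (b := 1)).exists_bound_of_continuousOn
    hc.continuousOn
  refine ⟨B, fun x => ?_⟩
  have hmem := add_latVec_neg_floor_mem_Tcube x
  rw [← hf x fun i => -⌊x i⌋]
  exact hB _ ⟨fun i => (hmem i trivial).1, fun i => (hmem i trivial).2.le⟩

lemma ZPeriodic.integrable {f : (Fin d → ℝ) → E} (hf : ZPeriodic f) (hc : Continuous f) :
    Integrable f (torusMeasure d) := by
  obtain ⟨B, hB⟩ := hf.exists_norm_le hc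
  exact Integrable.of_bound hc.aestronglyMeasurable B (ae_of_all _ hB)

lemma ZPeriodic.setLIntegral_preimage_add_latVec {f : (Fin d → ℝ) → ℝ≥0∞} (hf : ZPeriodic f)
    (k : Fin d → ℤ) :
    ∫⁻ x in (· + latVec k) ⁻¹' Tcube d, f x = ∫⁻ x, f x ∂torusMeasure d := by
  simpa only [torusMeasure, hf _ k] using (measurePreserving_add_right volume
    (latVec k)).setLIntegral_comp_preimage_emb (measurableEmbedding_addRight _) f (Tcube d)

lemma ZPeriodic.setLIntegral_pi_Ico_le {f : (Fin d → ℝ) → ℝ≥0∞} (hf : ZPeriodic f) (a b : ℤ) :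
    ∫⁻ x in Set.univ.pi fun _ => Ico (a : ℝ) b, f x ≤
      (b - a).toNat ^ d * ∫⁻ x, f x ∂torusMeasure d := by
  have hcover : (Set.univ.pi fun _ => Ico (a : ℝ) b : Set (Fin d → ℝ)) ⊆
      ⋃ k : Fin d → Finset.Ico a b, (· + latVec fun i => -(k i : ℤ)) ⁻¹' Tcube d := fun x hx =>
    mem_iUnion.2 ⟨fun i => ⟨⌊x i⌋, Finset.mem_Ico.2
      ⟨Int.le_floor.2 (hx i trivial).1, Int.floor_lt.2 (hx i trivial).2⟩⟩,
      add_latVec_neg_floor_mem_Tcube x⟩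
  calc ∫⁻ x in Set.univ.pi fun _ => Ico (a : ℝ) b, f x
      ≤ ∑' k : Fin d → Finset.Ico a b,
          ∫⁻ x in (· + latVec fun i => -(k i : ℤ)) ⁻¹' Tcube d, f x :=
        (lintegral_mono_set hcover).trans (lintegral_iUnion_le _ _)
    _ = (b - a).toNat ^ d * ∫⁻ x, f x ∂torusMeasure d := by
        simp [hf.setLIntegral_preimage_add_latVec]

lemma ZPeriodic.maximalFunction {R : ℝ} {f : (Fin d → ℝ) → ℝ≥0∞} (hf : ZPeriodic f) :
    ZPeriodic (maximalFunction volume R f) := fun x k => by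
  rw [← maximalFunction_comp_add_right]
  exact congrArg (fun g => _root_.maximalFunction volume R g x) (funext fun y => hf y k)

lemma lintegral_torusMeasure_maximalFunction_rpow_le {f : (Fin d → ℝ) → ℝ≥0∞} (hf : ZPeriodic f)
    (hmeas : Measurable f) {p : ℝ} (hp : 1 < p) :
    ∫⁻ x, maximalFunction volume (1 / 2) f x ^ p ∂torusMeasure d ≤
      12 ^ d * 2 ^ p * ENNReal.ofReal (p / (p - 1)) * ∫⁻ x, f x ^ p ∂torusMeasure d := by
  set Q : Set (Fin d → ℝ) := Set.univ.pi fun _ => Ico ((-1 : ℤ) : ℝ) (2 : ℤ)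
  have hQmeas : MeasurableSet Q := MeasurableSet.univ_pi fun _ => measurableSet_Ico
  have hball : ∀ x ∈ Tcube d, Metric.ball x (2 * (1 / 2)) ⊆ Q := fun x hx y hy i _ => by
    have hyx := abs_lt.1 ((dist_le_pi_dist y x i).trans_lt hy)
    have hxi := hx i trivial
    push_cast
    exact ⟨by linarith [hxi.1], by linarith [hxi.2]⟩
  calc ∫⁻ x, maximalFunction volume (1 / 2) f x ^ p ∂torusMeasure d
      = ∫⁻ x in Tcube d, maximalFunction volume (1 / 2) (Q.indicator f) x ^ p :=
        setLIntegral_congr_fun measurableSet_Tcube fun x hx => congrArg (· ^ p)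
          (maximalFunction_congr fun y hy => (indicator_of_mem (hball x hx hy) f).symm)
    _ ≤ ∫⁻ x, maximalFunction volume (1 / 2) (Q.indicator f) x ^ p :=
        setLIntegral_le_lintegral _ _
    _ ≤ 4 ^ d * 2 ^ p * ENNReal.ofReal (p / (p - 1)) * ∫⁻ x, Q.indicator f x ^ p := by
        simpa using lintegral_maximalFunction_rpow_le (μ := volume) (R := 1 / 2)
          (hmeas.indicator hQmeas) hp
    _ = 4 ^ d * 2 ^ p * ENNReal.ofReal (p / (p - 1)) * ∫⁻ x in Q, f x ^ p := by
        rw [← lintegral_indicator hQmeas]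
        congr 2 with x
        by_cases hx : x ∈ Q <;> simp [hx, (zero_lt_one.trans hp)]
    _ ≤ 4 ^ d * 2 ^ p * ENNReal.ofReal (p / (p - 1)) *
          (3 ^ d * ∫⁻ x, f x ^ p ∂torusMeasure d) := by
        gcongr
        exact (hf.comp (· ^ p)).setLIntegral_pi_Ico_le (-1) 2
    _ = 12 ^ d * 2 ^ p * ENNReal.ofReal (p / (p - 1)) * ∫⁻ x, f x ^ p ∂torusMeasure d := by
        rw [show (12 : ℝ≥0∞) = 4 * 3 by norm_num, mul_pow]
        ring

end ZPeriodic

lemma integral_divergence_eq_zero {F : (Fin d → ℝ) → Fin d → ℝ} (hF : ContDiff ℝ 1 F)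
    (hper : ZPeriodic F) :
    ∫ x, ∑ i, fderiv ℝ F x (Pi.single i 1) i ∂torusMeasure d = 0 := by
  cases d with
  | zero => simp
  | succ n =>
    have hdiv : Continuous fun x => ∑ i, fderiv ℝ F x (Pi.single i 1) i := by
      have := hF.continuous_fderiv one_ne_zero
      fun_prop
    rw [torusMeasure_eq_restrict_Icc, integral_divergence_of_hasFDerivAt_off_countable 0 1
      zero_le_one F (fderiv ℝ F) ∅ countable_empty hF.continuous.continuousOn
      (fun x _ => (hF.differentiable one_ne_zero x).hasFDerivAt)
      (hdiv.continuousOn.integrableOn_compact isCompact_Icc)]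
    refine Finset.sum_eq_zero fun i _ => sub_eq_zero.2 (congrArg _ (funext fun x => ?_))
    have hface : i.insertNth ((1 : Fin (n + 1) → ℝ) i) x =
        i.insertNth ((0 : Fin (n + 1) → ℝ) i) x + latVec (Pi.single i 1) := by
      refine funext fun j => Fin.succAboveCases i ?_ (fun j => ?_) j
      · simp [latVec]
      · simp [latVec, Fin.succAbove_ne]
    rw [hface, hper]

lemma continuous_grad {u : (Fin d → ℝ) → ℝ} (hu : ContDiff ℝ 1 u) : Continuous (grad u) := by
  have := hu.continuous_fderiv one_ne_zero
  unfold grad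
  fun_prop

lemma contDiff_grad {u : (Fin d → ℝ) → ℝ} {n : ℕ∞} (hu : ContDiff ℝ (n + 1) u) :
    ContDiff ℝ n (grad u) :=
  contDiff_pi' fun _ => (hu.fderiv_right le_rfl).clm_apply contDiff_const

lemma lap_eq_sum_fderiv_grad {u : (Fin d → ℝ) → ℝ} (hu : ContDiff ℝ 2 u) (x : Fin d → ℝ) :
    lap u x = ∑ i, fderiv ℝ (grad u) x (Pi.single i 1) i := by
  have hgrad : DifferentiableAt ℝ (grad u) x :=
    (contDiff_grad (n := 1) hu).differentiable one_ne_zero x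
  exact Finset.sum_congr rfl fun i _ => DFunLike.congr_fun (fderiv_apply hgrad i) _

lemma dotP_grad (v : Fin d → ℝ) (u : (Fin d → ℝ) → ℝ) (x : Fin d → ℝ) :
    dotP v (grad u x) = fderiv ℝ u x v := by
  conv_rhs => rw [pi_eq_sum_univ' v, map_sum]
  simp only [map_smul, smul_eq_mul]
  rfl

/-- The Dirichlet form `∫ ∇u · ∇v dx` of the torus. -/
noncomputable def dirichletForm (u v : (Fin d → ℝ) → ℝ) : ℝ :=
  ∫ x, dotP (grad u x) (grad v x) ∂torusMeasure d

section DirichletForm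

variable {u v w : (Fin d → ℝ) → ℝ}

lemma dirichletForm_eq_integral_fderiv :
    dirichletForm u v = ∫ x, fderiv ℝ v x (grad u x) ∂torusMeasure d := by
  simp only [dirichletForm, dotP_grad]

lemma dirichletForm_comm : dirichletForm u v = dirichletForm v u := by
  simp only [dirichletForm, dotP, mul_comm]

lemma dirichletForm_self_nonneg : 0 ≤ dirichletForm u u :=
  integral_nonneg fun _ => Finset.sum_nonneg fun _ _ => mul_self_nonneg _

lemma integrable_fderiv_apply_grad (hu : ContDiff ℝ 1 u) (hu' : ZPeriodic u) (hv : ContDiff ℝ 1 v)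
    (hv' : ZPeriodic v) : Integrable (fun x => fderiv ℝ v x (grad u x)) (torusMeasure d) :=
  (hv'.fderiv.comp₂ hu'.grad fun L y => L y).integrable
    ((hv.continuous_fderiv one_ne_zero).clm_apply (continuous_grad hu))

lemma dirichletForm_sub_right (hu : ContDiff ℝ 1 u) (hu' : ZPeriodic u) (hv : ContDiff ℝ 1 v)
    (hv' : ZPeriodic v) (hw : ContDiff ℝ 1 w) (hw' : ZPeriodic w) :
    dirichletForm u (v - w) = dirichletForm u v - dirichletForm u w := by
  have hfderiv (x) : fderiv ℝ (v - w) x = fderiv ℝ v x - fderiv ℝ w x :=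
    fderiv_sub (hv.differentiable one_ne_zero x) (hw.differentiable one_ne_zero x)
  simp only [dirichletForm_eq_integral_fderiv, hfderiv, sub_apply]
  exact integral_sub (integrable_fderiv_apply_grad hu hu' hv hv')
    (integrable_fderiv_apply_grad hu hu' hw hw')

lemma integrable_lap_mul (hu : ContDiff ℝ 2 u) (hu' : ZPeriodic u) (hv : Continuous v)
    (hv' : ZPeriodic v) : Integrable (fun x => lap u x * v x) (torusMeasure d) := by
  have := (contDiff_grad (n := 1) hu).continuous_fderiv one_ne_zero
  simp only [lap_eq_sum_fderiv_grad hu]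
  exact (hu'.grad.fderiv.comp₂ hv' fun L a => (∑ i, L (Pi.single i 1) i) * a).integrable
    (by fun_prop)

lemma dirichletForm_eq_neg_integral_lap_mul (hu : ContDiff ℝ 2 u) (hu' : ZPeriodic u)
    (hv : ContDiff ℝ 1 v) (hv' : ZPeriodic v) :
    dirichletForm u v = -∫ x, lap u x * v x ∂torusMeasure d := by
  have hgrad : ContDiff ℝ 1 (grad u) := contDiff_grad hu
  have hdiv (x) : ∑ i, fderiv ℝ (v • grad u) x (Pi.single i 1) i =
      fderiv ℝ v x (grad u x) + lap u x * v x := by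
    rw [lap_eq_sum_fderiv_grad hu, ← dotP_grad, dotP, Finset.sum_mul, ← Finset.sum_add_distrib]
    refine Finset.sum_congr rfl fun i _ => ?_
    rw [fderiv_smul (hv.differentiable one_ne_zero x) (hgrad.differentiable one_ne_zero x)]
    simp only [add_apply, smul_apply, ContinuousLinearMap.smulRight_apply, Pi.add_apply,
      Pi.smul_apply, smul_eq_mul, grad]
    ring
  rw [eq_neg_iff_add_eq_zero, dirichletForm_eq_integral_fderiv,
    ← integral_add (integrable_fderiv_apply_grad (hu.of_le one_le_two) hu' hv hv')
      (integrable_lap_mul hu hu' hv.continuous hv')]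
  simpa only [hdiv] using integral_divergence_eq_zero (hv.smul hgrad) (hv'.comp₂ hu'.grad (· • ·))

lemma dirichletForm_sub_eq_neg_integral_lap_sub_mul (hu : ContDiff ℝ 2 u) (hu' : ZPeriodic u)
    (hv : ContDiff ℝ 2 v) (hv' : ZPeriodic v) (hw : ContDiff ℝ 1 w) (hw' : ZPeriodic w) :
    dirichletForm (u - v) w = -∫ x, (lap u x - lap v x) * w x ∂torusMeasure d := by
  rw [dirichletForm_comm, dirichletForm_sub_right hw hw' (hu.of_le one_le_two) hu'
    (hv.of_le one_le_two) hv', dirichletForm_comm (v := u), dirichletForm_comm (v := v),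
    dirichletForm_eq_neg_integral_lap_mul hu hu' hw hw',
    dirichletForm_eq_neg_integral_lap_mul hv hv' hw hw']
  simp only [sub_mul]
  rw [integral_sub (integrable_lap_mul hu hu' hw.continuous hw')
    (integrable_lap_mul hv hv' hw.continuous hw')]
  ring

end DirichletForm

section WeakPoisson

open Filter Topology
open scoped Convolution ContDiff

lemma hasFDerivAt_convolution_of_bounded {E F : Type*} [NormedAddCommGroup E] [NormedSpace ℝ E]
    [MeasurableSpace E] [BorelSpace E] [SecondCountableTopology E] [NormedAddCommGroup F]
    [NormedSpace ℝ F] {μ : Measure E} {f : E → ℝ} (hf : Integrable f μ) {φ : E → F}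
    (hφ : ContDiff ℝ 1 φ) {A B : ℝ} (hA : ∀ x, ‖φ x‖ ≤ A) (hB : ∀ x, ‖fderiv ℝ φ x‖ ≤ B) (x : E) :
    HasFDerivAt (f ⋆[ContinuousLinearMap.lsmul ℝ ℝ, μ] φ)
      ((f ⋆[ContinuousLinearMap.lsmul ℝ ℝ, μ] fderiv ℝ φ) x) x := by
  have hφc := hφ.continuous
  have hmeas (y : E) : AEStronglyMeasurable (fun t => φ (y - t)) μ :=
    Continuous.aestronglyMeasurable (by fun_prop)
  have hmeas' (y : E) : AEStronglyMeasurable (fun t => fderiv ℝ φ (y - t)) μ :=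
    ((hφ.continuous_fderiv one_ne_zero).comp (continuous_sub_left y)).aestronglyMeasurable
  refine hasFDerivAt_integral_of_dominated_of_fderiv_le (F' := fun y t => f t • fderiv ℝ φ (y - t))
    (bound := fun t => ‖f t‖ * B) univ_mem (Eventually.of_forall fun y => hf.1.smul (hmeas y))
    (hf.smul_bdd A (hmeas x) (ae_of_all _ fun t => hA _)) (hf.1.smul (hmeas' x))
    (ae_of_all _ fun t y _ => ?_) (hf.norm.mul_const B) (ae_of_all _ fun t y _ => ?_)
  · rw [norm_smul]
    exact mul_le_mul_of_nonneg_left (hB _) (norm_nonneg _)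
  · exact ((hasFDerivAt_comp_sub t).2 (hφ.differentiable one_ne_zero _).hasFDerivAt).const_smul _

lemma ZPeriodic.convolution {E : Type*} [NormedAddCommGroup E] [NormedSpace ℝ E]
    {φ : (Fin d → ℝ) → E} (hφ : ZPeriodic φ) (f : (Fin d → ℝ) → ℝ) :
    ZPeriodic (f ⋆[ContinuousLinearMap.lsmul ℝ ℝ, volume] φ) := fun x k => by
  simp only [convolution_def, add_sub_right_comm x, hφ _ k]

lemma exists_contDiffBump_seq_tendsto_rOut_zero {E : Type*} [NormedAddCommGroup E] :
    ∃ ρ : ℕ → ContDiffBump (0 : E), Tendsto (fun n => (ρ n).rOut) atTop (𝓝 0) :=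
  ⟨fun n => ⟨1 / (n + 1) / 2, 1 / (n + 1), by positivity, half_lt_self (by positivity)⟩,
    tendsto_one_div_add_atTop_nhds_zero_nat⟩

lemma norm_normed_convolution_le {E F : Type*} [NormedAddCommGroup E] [NormedSpace ℝ E]
    [HasContDiffBump E] [MeasurableSpace E] [BorelSpace E] [FiniteDimensional ℝ E] {μ : Measure E}
    [μ.IsAddHaarMeasure] (ρ : ContDiffBump (0 : E)) [NormedAddCommGroup F]
    [NormedSpace ℝ F] {φ : E → F} {B : ℝ} (hB : ∀ x, ‖φ x‖ ≤ B) (x : E) :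
    ‖(ρ.normed μ ⋆[ContinuousLinearMap.lsmul ℝ ℝ, μ] φ) x‖ ≤ B := by
  refine (norm_integral_le_of_norm_le (ρ.integrable_normed.mul_const B) ?_).trans_eq ?_
  · refine ae_of_all _ fun t => ?_
    rw [ContinuousLinearMap.lsmul_apply, norm_smul, Real.norm_of_nonneg (ρ.nonneg_normed t)]
    exact mul_le_mul_of_nonneg_left (hB _) (ρ.nonneg_normed t)
  · rw [integral_mul_const, ρ.integral_normed, one_mul]

lemma ZPeriodic.exists_contDiff_seq_tendsto {φ : (Fin d → ℝ) → ℝ} (hφ' : ZPeriodic φ)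
    (hφ : ContDiff ℝ 1 φ) :
    ∃ (ψ : ℕ → (Fin d → ℝ) → ℝ) (B : ℝ), (∀ n, ContDiff ℝ ∞ (ψ n)) ∧ (∀ n, ZPeriodic (ψ n)) ∧
      (∀ n x, ‖ψ n x‖ ≤ B) ∧ (∀ n x, ‖_root_.fderiv ℝ (ψ n) x‖ ≤ B) ∧
      (∀ x, Tendsto (ψ · x) atTop (𝓝 (φ x))) ∧
      ∀ x, Tendsto (fun n => _root_.fderiv ℝ (ψ n) x) atTop (𝓝 (_root_.fderiv ℝ φ x)) := by
  obtain ⟨A, hA⟩ := hφ'.exists_norm_le hφ.continuous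
  have hφc := hφ.continuous_fderiv one_ne_zero
  obtain ⟨A', hA'⟩ := hφ'.fderiv.exists_norm_le hφc
  obtain ⟨ρ, hρ⟩ := exists_contDiffBump_seq_tendsto_rOut_zero (E := Fin d → ℝ)
  have hfderiv (n x) : _root_.fderiv ℝ
      ((ρ n).normed volume ⋆[ContinuousLinearMap.lsmul ℝ ℝ, volume] φ) x =
        ((ρ n).normed volume ⋆[ContinuousLinearMap.lsmul ℝ ℝ, volume] _root_.fderiv ℝ φ) x :=
    (hasFDerivAt_convolution_of_bounded (ρ n).integrable_normed hφ hA hA' x).fderiv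
  refine ⟨fun n => (ρ n).normed volume ⋆[ContinuousLinearMap.lsmul ℝ ℝ, volume] φ, max A A',
    fun n => (ρ n).hasCompactSupport_normed.contDiff_convolution_left _ (ρ n).contDiff_normed
      hφ.continuous.locallyIntegrable, fun n => hφ'.convolution _, fun n x => ?_, fun n x => ?_,
    fun x => ContDiffBump.convolution_tendsto_right_of_continuous hρ hφ.continuous x, fun x => ?_⟩
  · exact (norm_normed_convolution_le (ρ n) hA x).trans (le_max_left _ _)
  · rw [hfderiv]
    exact (norm_normed_convolution_le (ρ n) hA' x).trans (le_max_right _ _)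
  · simp only [hfderiv]
    exact ContDiffBump.convolution_tendsto_right_of_continuous hρ hφc x

lemma IsWeakPoisson.mul_dirichletForm_eq {ε : ℝ} {U g φ : (Fin d → ℝ) → ℝ}
    (h : IsWeakPoisson ε U g) (hU : ContDiff ℝ 1 U) (hU' : ZPeriodic U)
    (hg : Integrable g (torusMeasure d)) (hφ : ContDiff ℝ 1 φ) (hφ' : ZPeriodic φ) :
    ε ^ 2 * dirichletForm U φ = -∫ x, g x * φ x ∂torusMeasure d := by
  obtain ⟨ψ, B, hψ, hψ', hB, hB', hlim, hlim'⟩ := hφ'.exists_contDiff_seq_tendsto hφ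
  have hgradU : Integrable (grad U) (torusMeasure d) := hU'.grad.integrable (continuous_grad hU)
  have hleft : Tendsto (fun n => dirichletForm U (ψ n)) atTop (𝓝 (dirichletForm U φ)) := by
    simp only [dirichletForm_eq_integral_fderiv]
    refine tendsto_integral_of_dominated_convergence (fun x => B * ‖grad U x‖) (fun n => ?_)
      (hgradU.norm.const_mul B) (fun n => ae_of_all _ fun x => ?_)
      (ae_of_all _ fun x => ((ContinuousLinearMap.apply ℝ ℝ (grad U x)).continuous.tendsto _).comp
        (hlim' x))
    · exact (integrable_fderiv_apply_grad hU hU' ((hψ n).of_le (by simp)) (hψ' n)).1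
    · exact (ContinuousLinearMap.le_opNorm _ _).trans
        (mul_le_mul_of_nonneg_right (hB' n x) (norm_nonneg _))
  have hright : Tendsto (fun n => ∫ x, g x * ψ n x ∂torusMeasure d) atTop
      (𝓝 (∫ x, g x * φ x ∂torusMeasure d)) := by
    refine tendsto_integral_of_dominated_convergence (fun x => ‖g x‖ * B) (fun n => ?_)
      (hg.norm.mul_const B) (fun n => ae_of_all _ fun x => ?_)
      (ae_of_all _ fun x => (hlim x).const_mul _)
    · exact hg.1.mul (hψ n).continuous.aestronglyMeasurable
    · rw [norm_mul]
      exact mul_le_mul_of_nonneg_left (hB n x) (norm_nonneg _)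
  exact tendsto_nhds_unique (hleft.const_mul (ε ^ 2))
    (hright.neg.congr fun n => (h (ψ n) (hψ n) (hψ' n)).symm)

end WeakPoisson

section Wasserstein

variable {u h : (Fin d → ℝ) → ℝ}

lemma euclNorm_sq (v : Fin d → ℝ) : euclNorm v ^ 2 = dotP v v := by
  rw [euclNorm, Real.sq_sqrt (Finset.sum_nonneg fun i _ => sq_nonneg _)]
  exact Finset.sum_congr rfl fun i _ => sq (v i)

lemma norm_le_euclNorm (v : Fin d → ℝ) : ‖v‖ ≤ euclNorm v :=
  (pi_norm_le_iff_of_nonneg (Real.sqrt_nonneg _)).2 fun i =>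
    Real.abs_le_sqrt (Finset.single_le_sum (fun j _ => sq_nonneg (v j)) (Finset.mem_univ i))

lemma euclNorm_sq_le (v : Fin d → ℝ) : euclNorm v ^ 2 ≤ d * ‖v‖ ^ 2 := by
  rw [euclNorm_sq]
  have hcoord (i) : v i * v i ≤ ‖v‖ ^ 2 := by
    rw [← sq, ← sq_abs]
    exact pow_le_pow_left₀ (abs_nonneg _) (norm_le_pi_norm v i) 2
  simpa [dotP] using Finset.sum_le_card_nsmul Finset.univ _ _ fun i _ => hcoord i

lemma exists_tdist_eq_euclNorm (x y : Fin d → ℝ) :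
    ∃ k : Fin d → ℤ, ‖x - y + latVec k‖ ≤ 1 / 2 ∧ tdist x y = euclNorm (x - y + latVec k) := by
  have hround (i) : (x - y + latVec fun i => -round (x i - y i)) i =
      x i - y i - round (x i - y i) := by
    simp only [latVec, Pi.add_apply, Pi.sub_apply, Int.cast_neg, ← sub_eq_add_neg]
  refine ⟨fun i => -round (x i - y i), (pi_norm_le_iff_of_nonneg (by norm_num)).2 fun i => ?_,
    (ciInf_le ⟨0, by rintro _ ⟨k, rfl⟩; exact Real.sqrt_nonneg _⟩ _).antisymm
      (le_ciInf fun k => Real.sqrt_le_sqrt (Finset.sum_le_sum fun i _ => sq_le_sq.2 ?_))⟩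
  · rw [hround]
    exact abs_sub_round _
  · rw [hround]
    simpa [latVec] using round_le (x i - y i) (-k i)

lemma tdist_nonneg (x y : Fin d → ℝ) : 0 ≤ tdist x y :=
  Real.iInf_nonneg fun _ => Real.sqrt_nonneg _

lemma measurable_tdist : Measurable fun z : (Fin d → ℝ) × (Fin d → ℝ) => tdist z.1 z.2 := by
  unfold tdist euclNorm
  fun_prop

lemma integrable_tdist_sq (κ : Measure ((Fin d → ℝ) × (Fin d → ℝ))) [IsFiniteMeasure κ] :
    Integrable (fun z => tdist z.1 z.2 ^ (2 : ℝ)) κ := by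
  refine Integrable.of_bound (measurable_tdist.pow_const _).aestronglyMeasurable
    (d * (1 / 2) ^ 2) (ae_of_all _ fun z => ?_)
  obtain ⟨k, hk, htdist⟩ := exists_tdist_eq_euclNorm z.1 z.2
  rw [Real.norm_of_nonneg (Real.rpow_nonneg (tdist_nonneg _ _) _), Real.rpow_two, htdist]
  exact (euclNorm_sq_le _).trans (by gcongr)

lemma lintegral_ofReal_tdist_sq (κ : Measure ((Fin d → ℝ) × (Fin d → ℝ))) [IsFiniteMeasure κ] :
    ∫⁻ z, ENNReal.ofReal (tdist z.1 z.2) ^ (2 : ℝ) ∂κ =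
      ENNReal.ofReal (∫ z, tdist z.1 z.2 ^ (2 : ℝ) ∂κ) := by
  rw [ofReal_integral_eq_lintegral_ofReal (integrable_tdist_sq κ)
    (ae_of_all _ fun z => Real.rpow_nonneg (tdist_nonneg _ _) _)]
  simp only [ENNReal.ofReal_rpow_of_nonneg (tdist_nonneg _ _) zero_le_two]

lemma integral_tdist_rpow_nonneg (κ : Measure ((Fin d → ℝ) × (Fin d → ℝ))) (q : ℝ) :
    0 ≤ ∫ z, tdist z.1 z.2 ^ q ∂κ :=
  integral_nonneg fun _ => Real.rpow_nonneg (tdist_nonneg _ _) _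

lemma wassPow_nonneg (q : ℝ) (μ ν : Measure (Fin d → ℝ)) : 0 ≤ WassPow q μ ν :=
  Real.sInf_nonneg fun _ ⟨_, _, _, hc⟩ => hc ▸ integral_tdist_rpow_nonneg _ _

lemma ZPeriodic.enorm_sub_le_tdist_mul {E : Type*} [NormedAddCommGroup E] [NormedSpace ℝ E]
    {u : (Fin d → ℝ) → E} (hu' : ZPeriodic u) (hu : ContDiff ℝ 1 u) (x y : Fin d → ℝ) :
    ‖u x - u y‖ₑ ≤ 2 * ENNReal.ofReal (tdist x y) *
      (_root_.maximalFunction volume (1 / 2) (fun q => ‖_root_.fderiv ℝ u q‖ₑ) x +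
        _root_.maximalFunction volume (1 / 2) (fun q => ‖_root_.fderiv ℝ u q‖ₑ) y) := by
  obtain ⟨k, hk, htdist⟩ := exists_tdist_eq_euclNorm x y
  rw [← add_sub_right_comm] at hk htdist
  have hnorm : ‖x + latVec k - y‖ₑ ≤ ENNReal.ofReal (tdist x y) := by
    rw [htdist, ← ofReal_norm]
    exact ENNReal.ofReal_le_ofReal (norm_le_euclNorm _)
  have hle := enorm_sub_le_maximalFunction_add (μ := volume) hu hk
  rw [hu', (hu'.fderiv.comp (‖·‖ₑ)).maximalFunction] at hle
  exact hle.trans (by gcongr)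

/-- `h` is an essentially bounded probability density on the torus. -/
structure IsBoundedDensity (h : (Fin d → ℝ) → ℝ) : Prop where
  nonneg : 0 ≤ᵐ[torusMeasure d] h
  integral_eq_one : ∫ x, h x ∂torusMeasure d = 1
  memLp_top : MemLp h ⊤ (torusMeasure d)

lemma IsBoundedDensity.isProbabilityMeasure (hh : IsBoundedDensity h) :
    IsProbabilityMeasure (densMeasure h) :=
  ⟨by
    rw [densMeasure, withDensity_apply _ .univ, Measure.restrict_univ,
      ← ofReal_integral_eq_lintegral_ofReal (hh.memLp_top.integrable le_top) hh.nonneg,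
      hh.integral_eq_one, ENNReal.ofReal_one]⟩

lemma densMeasure_le_smul (hh : MemLp h ⊤ (torusMeasure d)) {M : ℝ} (hM : LpNorm ⊤ h ≤ M) :
    densMeasure h ≤ ENNReal.ofReal M • torusMeasure d := by
  rw [← withDensity_const]
  refine withDensity_mono ?_
  filter_upwards [enorm_ae_le_eLpNormEssSup h (torusMeasure d)] with x hx
  calc ENNReal.ofReal (h x) ≤ ‖h x‖ₑ := Real.ofReal_le_enorm _
    _ ≤ eLpNorm h ⊤ (torusMeasure d) := by rwa [eLpNorm_exponent_top]
    _ = ENNReal.ofReal (LpNorm ⊤ h) := (ENNReal.ofReal_toReal hh.eLpNorm_ne_top).symm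
    _ ≤ ENNReal.ofReal M := ENNReal.ofReal_le_ofReal hM

lemma IsBoundedDensity.integral_densMeasure (hh : IsBoundedDensity h) (f : (Fin d → ℝ) → ℝ) :
    ∫ x, f x ∂densMeasure h = ∫ x, h x * f x ∂torusMeasure d := by
  rw [densMeasure, integral_withDensity_eq_integral_toReal_smul₀
    hh.memLp_top.1.aemeasurable.ennreal_ofReal (ae_of_all _ fun _ => ENNReal.ofReal_lt_top)]
  refine integral_congr_ae ?_
  filter_upwards [hh.nonneg] with x hx
  rw [ENNReal.toReal_ofReal hx, smul_eq_mul]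

section Coupling

variable {X : Type*} [MeasurableSpace X] {κ : Measure (X × X)} {μ ν : Measure X}

lemma IsCoupling.lintegral_add_sq_le (hκ : IsCoupling κ μ ν) {τ : Measure X} {c : ℝ≥0∞}
    (hμ : μ ≤ c • τ) (hν : ν ≤ c • τ) {f : X → ℝ≥0∞} (hf : Measurable f) :
    ∫⁻ z, (f z.1 + f z.2) ^ (2 : ℝ) ∂κ ≤ 4 * c * ∫⁻ x, f x ^ (2 : ℝ) ∂τ := by
  have hf2 : Measurable fun x => f x ^ (2 : ℝ) := hf.pow_const _
  have hmarginal {ρ : Measure X} (hρ : ρ ≤ c • τ) :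
      ∫⁻ x, f x ^ (2 : ℝ) ∂ρ ≤ c * ∫⁻ x, f x ^ (2 : ℝ) ∂τ :=
    (lintegral_mono' hρ le_rfl).trans_eq (lintegral_smul_measure _ _)
  calc ∫⁻ z, (f z.1 + f z.2) ^ (2 : ℝ) ∂κ
      ≤ ∫⁻ z, 2 * (f z.1 ^ (2 : ℝ) + f z.2 ^ (2 : ℝ)) ∂κ := lintegral_mono fun z => by
        convert ENNReal.rpow_add_le_mul_rpow_add_rpow (f z.1) (f z.2) one_le_two using 2
        norm_num
    _ = 2 * (∫⁻ x, f x ^ (2 : ℝ) ∂μ + ∫⁻ x, f x ^ (2 : ℝ) ∂ν) := by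
        rw [← hκ.1, ← hκ.2, lintegral_map hf2 measurable_fst, lintegral_map hf2 measurable_snd,
          lintegral_const_mul _ (by fun_prop), lintegral_add_left (by fun_prop)]
    _ ≤ 2 * (c * ∫⁻ x, f x ^ (2 : ℝ) ∂τ + c * ∫⁻ x, f x ^ (2 : ℝ) ∂τ) := by
        gcongr
        exacts [hmarginal hμ, hmarginal hν]
    _ = 4 * c * ∫⁻ x, f x ^ (2 : ℝ) ∂τ := by ring

lemma sq_lintegral_mul_le {f g : X → ℝ≥0∞} (hf : AEMeasurable f μ) (hg : AEMeasurable g μ) :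
    (∫⁻ x, f x * g x ∂μ) ^ 2 ≤ (∫⁻ x, f x ^ (2 : ℝ) ∂μ) * ∫⁻ x, g x ^ (2 : ℝ) ∂μ := by
  have hsq (a : ℝ≥0∞) : (a ^ (1 / 2 : ℝ)) ^ 2 = a := by
    rw [← ENNReal.rpow_two, ← ENNReal.rpow_mul]
    norm_num
  calc (∫⁻ x, f x * g x ∂μ) ^ 2
      ≤ ((∫⁻ x, f x ^ (2 : ℝ) ∂μ) ^ (1 / 2 : ℝ) * (∫⁻ x, g x ^ (2 : ℝ) ∂μ) ^ (1 / 2 : ℝ)) ^ 2 := by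
        gcongr
        exact ENNReal.lintegral_mul_le_Lp_mul_Lq μ Real.HolderConjugate.two_two hf hg
    _ = _ := by rw [mul_pow, hsq, hsq]

end Coupling

lemma sq_norm_fderiv_le (u : (Fin d → ℝ) → ℝ) (x : Fin d → ℝ) :
    ‖fderiv ℝ u x‖ ^ 2 ≤ d * dotP (grad u x) (grad u x) := by
  have hnorm : ‖fderiv ℝ u x‖ ≤ ∑ i, |grad u x i| := by
    refine ContinuousLinearMap.opNorm_le_bound _ (Finset.sum_nonneg fun i _ => abs_nonneg _)
      fun v => ?_
    rw [← dotP_grad, dotP, Finset.sum_mul]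
    refine norm_sum_le_of_le _ fun i _ => ?_
    rw [norm_mul, mul_comm]
    exact mul_le_mul_of_nonneg_left (norm_le_pi_norm v i) (abs_nonneg _)
  calc ‖fderiv ℝ u x‖ ^ 2 ≤ (∑ i, |grad u x i|) ^ 2 := by gcongr
    _ ≤ Finset.card Finset.univ * ∑ i, |grad u x i| ^ 2 := sq_sum_le_card_mul_sum_sq
    _ = d * dotP (grad u x) (grad u x) := by
      simp only [sq, Finset.card_univ, Fintype.card_fin, dotP, abs_mul_abs_self]

lemma lintegral_enorm_fderiv_sq_le (hu : ContDiff ℝ 1 u) (hu' : ZPeriodic u) :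
    ∫⁻ x, ‖fderiv ℝ u x‖ₑ ^ (2 : ℝ) ∂torusMeasure d ≤ ENNReal.ofReal (d * dirichletForm u u) := by
  have hint : Integrable (fun x => d * dotP (grad u x) (grad u x)) (torusMeasure d) := by
    simpa only [dotP_grad] using (integrable_fderiv_apply_grad hu hu' hu hu').const_mul (d : ℝ)
  rw [dirichletForm, ← integral_const_mul, ofReal_integral_eq_lintegral_ofReal hint
    (ae_of_all _ fun x => (sq_nonneg _).trans (sq_norm_fderiv_le u x))]
  refine lintegral_mono fun x => ?_
  rw [ENNReal.rpow_two, ← ofReal_norm, ← ENNReal.ofReal_pow (norm_nonneg _)]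
  exact ENNReal.ofReal_le_ofReal (sq_norm_fderiv_le u x)

lemma IsCoupling.sq_lintegral_enorm_sub_le {κ : Measure ((Fin d → ℝ) × (Fin d → ℝ))}
    {μ ν : Measure (Fin d → ℝ)} (hκ : IsCoupling κ μ ν) {c : ℝ≥0∞} (hμ : μ ≤ c • torusMeasure d)
    (hν : ν ≤ c • torusMeasure d) (hu : ContDiff ℝ 1 u) (hu' : ZPeriodic u) :
    (∫⁻ z, ‖u z.1 - u z.2‖ₑ ∂κ) ^ 2 ≤ 128 * 12 ^ d * c *
      (∫⁻ z, ENNReal.ofReal (tdist z.1 z.2) ^ (2 : ℝ) ∂κ) *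
        ∫⁻ x, ‖fderiv ℝ u x‖ₑ ^ (2 : ℝ) ∂torusMeasure d := by
  set m := maximalFunction volume (1 / 2) fun x => ‖fderiv ℝ u x‖ₑ
  have hm : Measurable m := measurable_maximalFunction
  have hdist : Measurable fun z : (Fin d → ℝ) × (Fin d → ℝ) => ENNReal.ofReal (tdist z.1 z.2) :=
    measurable_tdist.ennreal_ofReal
  set I := ∫⁻ z, ENNReal.ofReal (tdist z.1 z.2) ^ (2 : ℝ) ∂κ
  calc (∫⁻ z, ‖u z.1 - u z.2‖ₑ ∂κ) ^ 2
      ≤ (2 * ∫⁻ z, ENNReal.ofReal (tdist z.1 z.2) * (m z.1 + m z.2) ∂κ) ^ 2 := by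
        rw [← lintegral_const_mul _ (by fun_prop)]
        gcongr
        rw [← mul_assoc]
        exact hu'.enorm_sub_le_tdist_mul hu _ _
    _ ≤ 2 ^ 2 * (I * ∫⁻ z, (m z.1 + m z.2) ^ (2 : ℝ) ∂κ) := by
        rw [mul_pow]
        gcongr
        exact sq_lintegral_mul_le hdist.aemeasurable (by fun_prop)
    _ ≤ 2 ^ 2 * (I * (4 * c * (12 ^ d * 2 ^ (2 : ℝ) * ENNReal.ofReal (2 / (2 - 1)) *
          ∫⁻ x, ‖fderiv ℝ u x‖ₑ ^ (2 : ℝ) ∂torusMeasure d))) := by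
        gcongr
        refine (hκ.lintegral_add_sq_le hμ hν hm).trans ?_
        gcongr
        exact lintegral_torusMeasure_maximalFunction_rpow_le (hu'.fderiv.comp (‖·‖ₑ))
          (hu.continuous_fderiv one_ne_zero).enorm.measurable one_lt_two
    _ = _ := by
        rw [ENNReal.rpow_two, show (2 / (2 - 1) : ℝ) = 2 by norm_num, ENNReal.ofReal_ofNat]
        ring

/-- The constant of the `L²` stability estimate: `128 * 12 ^ d` comes from the maximal inequality,
and `d` from comparing the operator norm of the derivative, which is dual to the sup norm of
`Fin d → ℝ`, with the Euclidean norm of the gradient. -/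
noncomputable def stabilityConst (d : ℕ) : ℝ := 128 * 12 ^ d * d

lemma stabilityConst_nonneg : 0 ≤ stabilityConst d := by
  unfold stabilityConst
  positivity

lemma IsCoupling.sq_integral_sub_le {h₁ h₂ : (Fin d → ℝ) → ℝ}
    {κ : Measure ((Fin d → ℝ) × (Fin d → ℝ))} [IsFiniteMeasure κ]
    (hκ : IsCoupling κ (densMeasure h₁) (densMeasure h₂)) (hh₁ : MemLp h₁ ⊤ (torusMeasure d))
    (hh₂ : MemLp h₂ ⊤ (torusMeasure d)) (hu : ContDiff ℝ 1 u) (hu' : ZPeriodic u) :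
    (∫ z, (u z.1 - u z.2) ∂κ) ^ 2 ≤ stabilityConst d * max (LpNorm ⊤ h₁) (LpNorm ⊤ h₂) *
      (∫ z, tdist z.1 z.2 ^ (2 : ℝ) ∂κ) * dirichletForm u u := by
  set M := max (LpNorm ⊤ h₁) (LpNorm ⊤ h₂)
  have hM : 0 ≤ M := le_max_of_le_left ENNReal.toReal_nonneg
  have hI := integral_tdist_rpow_nonneg κ 2
  have hD : 0 ≤ dirichletForm u u := dirichletForm_self_nonneg
  rw [← ENNReal.ofReal_le_ofReal_iff (by have := stabilityConst_nonneg (d := d); positivity)]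
  calc ENNReal.ofReal ((∫ z, (u z.1 - u z.2) ∂κ) ^ 2)
      = ‖∫ z, (u z.1 - u z.2) ∂κ‖ₑ ^ 2 := by
        rw [← ofReal_norm, ← ENNReal.ofReal_pow (norm_nonneg _), Real.norm_eq_abs, sq_abs]
    _ ≤ (∫⁻ z, ‖u z.1 - u z.2‖ₑ ∂κ) ^ 2 := by
        gcongr
        exact enorm_integral_le_lintegral_enorm _
    _ ≤ 128 * 12 ^ d * ENNReal.ofReal M * ENNReal.ofReal (∫ z, tdist z.1 z.2 ^ (2 : ℝ) ∂κ) *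
          ENNReal.ofReal (d * dirichletForm u u) := by
        rw [← lintegral_ofReal_tdist_sq]
        refine (hκ.sq_lintegral_enorm_sub_le (densMeasure_le_smul hh₁ (le_max_left _ _))
          (densMeasure_le_smul hh₂ (le_max_right _ _)) hu hu').trans ?_
        gcongr
        exact lintegral_enorm_fderiv_sq_le hu hu'
    _ = _ := by
        rw [show (128 * 12 ^ d : ℝ≥0∞) = ENNReal.ofReal (128 * 12 ^ d) by
            rw [ENNReal.ofReal_mul (by norm_num), ENNReal.ofReal_pow (by norm_num)]
            norm_num,
          ← ENNReal.ofReal_mul (by positivity), ← ENNReal.ofReal_mul (by positivity),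
          ← ENNReal.ofReal_mul (by positivity), stabilityConst]
        congr 1
        ring

lemma IsCoupling.integral_sub_eq {h₁ h₂ : (Fin d → ℝ) → ℝ}
    {κ : Measure ((Fin d → ℝ) × (Fin d → ℝ))} [IsFiniteMeasure κ]
    (hκ : IsCoupling κ (densMeasure h₁) (densMeasure h₂)) (hh₁ : IsBoundedDensity h₁)
    (hh₂ : IsBoundedDensity h₂) (hu : Continuous u) (hu' : ZPeriodic u) :
    ∫ z, (u z.1 - u z.2) ∂κ =
      (∫ x, h₁ x * u x ∂torusMeasure d) - ∫ x, h₂ x * u x ∂torusMeasure d := by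
  obtain ⟨B, hB⟩ := hu'.exists_norm_le hu
  have hint₁ : Integrable (fun z : (Fin d → ℝ) × (Fin d → ℝ) => u z.1) κ :=
    Integrable.of_bound (by fun_prop) B (ae_of_all _ fun z => hB z.1)
  have hint₂ : Integrable (fun z : (Fin d → ℝ) × (Fin d → ℝ) => u z.2) κ :=
    Integrable.of_bound (by fun_prop) B (ae_of_all _ fun z => hB z.2)
  rw [integral_sub hint₁ hint₂, ← hh₁.integral_densMeasure,
    ← hh₂.integral_densMeasure, ← hκ.1, ← hκ.2,
    integral_map measurable_fst.aemeasurable hu.aestronglyMeasurable,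
    integral_map measurable_snd.aemeasurable hu.aestronglyMeasurable]

lemma IsWeakPoisson.mul_dirichletForm_eq_integral_sub {ε : ℝ} {U h : (Fin d → ℝ) → ℝ}
    (hw : IsWeakPoisson ε U fun x => h x - 1) (hh : IsBoundedDensity h) (hU : ContDiff ℝ 1 U)
    (hU' : ZPeriodic U) (hu : ContDiff ℝ 1 u) (hu' : ZPeriodic u) :
    ε ^ 2 * dirichletForm U u =
      (∫ x, u x ∂torusMeasure d) - ∫ x, h x * u x ∂torusMeasure d := by
  have hint : Integrable h (torusMeasure d) := hh.memLp_top.integrable le_top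
  obtain ⟨B, hB⟩ := hu'.exists_norm_le hu.continuous
  rw [hw.mul_dirichletForm_eq hU hU' (hint.sub (integrable_const 1)) hu hu']
  simp only [sub_mul, one_mul]
  rw [integral_sub (hint.mul_bdd hu.continuous.aestronglyMeasurable (ae_of_all _ hB))
    (hu'.integrable hu.continuous), neg_sub]

section Stability

variable {ε : ℝ} {h₁ h₂ U₁ U₂ V₁ V₂ : (Fin d → ℝ) → ℝ}

lemma exists_isCoupling_densMeasure (hh₁ : IsBoundedDensity h₁) (hh₂ : IsBoundedDensity h₂) :
    ∃ κ : Measure ((Fin d → ℝ) × (Fin d → ℝ)), IsProbabilityMeasure κ ∧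
      IsCoupling κ (densMeasure h₁) (densMeasure h₂) := by
  have := hh₁.isProbabilityMeasure
  have := hh₂.isProbabilityMeasure
  exact ⟨(densMeasure h₁).prod (densMeasure h₂), inferInstance, by simp [IsCoupling]⟩

lemma IsCoupling.dirichletForm_sub_le {κ : Measure ((Fin d → ℝ) × (Fin d → ℝ))} [IsFiniteMeasure κ]
    (hκ : IsCoupling κ (densMeasure h₁) (densMeasure h₂)) (hε : ε ≠ 0)
    (hh₁ : IsBoundedDensity h₁) (hh₂ : IsBoundedDensity h₂)
    (hU₁ : ContDiff ℝ 1 U₁) (hU₁' : ZPeriodic U₁) (hU₂ : ContDiff ℝ 1 U₂) (hU₂' : ZPeriodic U₂)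
    (hw₁ : IsWeakPoisson ε U₁ fun x => h₁ x - 1) (hw₂ : IsWeakPoisson ε U₂ fun x => h₂ x - 1) :
    dirichletForm (U₂ - U₁) (U₂ - U₁) ≤ stabilityConst d / ε ^ 4 *
      max (LpNorm ⊤ h₁) (LpNorm ⊤ h₂) * ∫ z, tdist z.1 z.2 ^ (2 : ℝ) ∂κ := by
  set b := U₂ - U₁
  have hb : ContDiff ℝ 1 b := hU₂.sub hU₁
  have hb' : ZPeriodic b := hU₂'.sub hU₁'
  set M := max (LpNorm ⊤ h₁) (LpNorm ⊤ h₂)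
  have hM : 0 ≤ M := le_max_of_le_left ENNReal.toReal_nonneg
  have hI := integral_tdist_rpow_nonneg κ 2
  have hK : 0 ≤ stabilityConst d := stabilityConst_nonneg
  have htest : ε ^ 2 * dirichletForm b b = ∫ z, (b z.1 - b z.2) ∂κ := by
    rw [hκ.integral_sub_eq hh₁ hh₂ hb.continuous hb', dirichletForm_sub_right hb hb' hU₂ hU₂' hU₁
      hU₁', dirichletForm_comm (v := U₂), dirichletForm_comm (v := U₁), mul_sub,
      hw₁.mul_dirichletForm_eq_integral_sub hh₁ hU₁ hU₁' hb hb',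
      hw₂.mul_dirichletForm_eq_integral_sub hh₂ hU₂ hU₂' hb hb']
    ring
  have hsq := hκ.sq_integral_sub_le hh₁.memLp_top hh₂.memLp_top hb hb'
  rw [← htest] at hsq
  rcases (dirichletForm_self_nonneg (u := b)).eq_or_lt with hzero | hpos
  · rw [← hzero]
    positivity
  · rw [div_mul_eq_mul_div, div_mul_eq_mul_div, le_div_iff₀' (by positivity)]
    exact le_of_mul_le_mul_right (by linarith) hpos

lemma dirichletForm_sub_le_wassPow (hε : ε ≠ 0)
    (hh₁ : IsBoundedDensity h₁) (hh₂ : IsBoundedDensity h₂)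
    (hU₁ : ContDiff ℝ 1 U₁) (hU₁' : ZPeriodic U₁) (hU₂ : ContDiff ℝ 1 U₂) (hU₂' : ZPeriodic U₂)
    (hw₁ : IsWeakPoisson ε U₁ fun x => h₁ x - 1) (hw₂ : IsWeakPoisson ε U₂ fun x => h₂ x - 1) :
    dirichletForm (U₂ - U₁) (U₂ - U₁) ≤ stabilityConst d / ε ^ 4 *
      max (LpNorm ⊤ h₁) (LpNorm ⊤ h₂) * WassPow 2 (densMeasure h₁) (densMeasure h₂) := by
  have hcoef : 0 ≤ stabilityConst d / ε ^ 4 * max (LpNorm ⊤ h₁) (LpNorm ⊤ h₂) :=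
    mul_nonneg (div_nonneg stabilityConst_nonneg (by positivity))
      (le_max_of_le_left ENNReal.toReal_nonneg)
  obtain ⟨κ₀, hprob, hκ₀⟩ := exists_isCoupling_densMeasure hh₁ hh₂
  rw [WassPow, ← smul_eq_mul, ← Real.sInf_smul_of_nonneg hcoef]
  refine le_csInf (Nonempty.smul_set ⟨_, κ₀, hprob, hκ₀, rfl⟩) ?_
  rintro _ ⟨_, ⟨κ, _, hκ, rfl⟩, rfl⟩
  exact hκ.dirichletForm_sub_le hε hh₁ hh₂ hU₁ hU₁' hU₂ hU₂' hw₁ hw₂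

lemma dirichletForm_self_le_of_sub_nonpos {b w : (Fin d → ℝ) → ℝ} (hb : ContDiff ℝ 1 b)
    (hb' : ZPeriodic b) (hw : ContDiff ℝ 1 w) (hw' : ZPeriodic w)
    (hle : dirichletForm w (w - b) ≤ 0) : dirichletForm w w ≤ dirichletForm b b := by
  have hwb : ContDiff ℝ 1 (w - b) := hw.sub hb
  have hsq : 0 ≤ dirichletForm (w - b) (w - b) := dirichletForm_self_nonneg
  have hcross : dirichletForm b (w - b) = dirichletForm w b - dirichletForm b b := by
    rw [dirichletForm_sub_right hb hb' hw hw' hb hb', dirichletForm_comm]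
  rw [dirichletForm_sub_right hwb (hw'.sub hb') hw hw' hb hb', dirichletForm_comm,
    dirichletForm_comm (v := b), hcross] at hsq
  rw [dirichletForm_sub_right hw hw' hw hw' hb hb'] at hle hsq
  linarith

lemma dirichletForm_sub_le_of_monotone {g : ℝ → ℝ} (hg : Monotone g) (hε : ε ≠ 0)
    (hU₁ : ContDiff ℝ 1 U₁) (hU₁' : ZPeriodic U₁) (hU₂ : ContDiff ℝ 1 U₂) (hU₂' : ZPeriodic U₂)
    (hV₁ : ContDiff ℝ 2 V₁) (hV₁' : ZPeriodic V₁) (hV₂ : ContDiff ℝ 2 V₂) (hV₂' : ZPeriodic V₂)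
    (he₁ : ∀ x, ε ^ 2 * lap V₁ x = g (U₁ x + V₁ x))
    (he₂ : ∀ x, ε ^ 2 * lap V₂ x = g (U₂ x + V₂ x)) :
    dirichletForm (V₁ - V₂) (V₁ - V₂) ≤ dirichletForm (U₂ - U₁) (U₂ - U₁) := by
  have hb := hU₂.sub hU₁
  have hb' := hU₂'.sub hU₁'
  have hw := hV₁.sub hV₂
  have hw' := hV₁'.sub hV₂'
  set φ := V₁ - V₂ - (U₂ - U₁) with hφ_def
  have hφ : ContDiff ℝ 1 φ := (hw.of_le one_le_two).sub hb
  have hφ' : ZPeriodic φ := hw'.sub hb'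
  have hmono (x) : 0 ≤ (lap V₁ x - lap V₂ x) * φ x := by
    have hφ_eq : φ x = U₁ x + V₁ x - (U₂ x + V₂ x) := by
      simp only [hφ_def, Pi.sub_apply]
      ring
    refine nonneg_of_mul_nonneg_right (a := ε ^ 2) ?_ (by positivity)
    rw [← mul_assoc, mul_sub, he₁, he₂, hφ_eq]
    exact (hg.monovary monotone_id).sub_mul_sub_nonneg _ _
  refine dirichletForm_self_le_of_sub_nonpos hb hb' (hw.of_le one_le_two) hw' ?_
  rw [dirichletForm_sub_eq_neg_integral_lap_sub_mul hV₁ hV₁' hV₂ hV₂' hφ hφ']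
  exact neg_nonpos.2 (integral_nonneg hmono)

theorem statement10_general {g : ℝ → ℝ} (hg : Monotone g) (hε : ε ≠ 0)
    (hh₁ : IsBoundedDensity h₁) (hh₂ : IsBoundedDensity h₂)
    (hU₁ : ContDiff ℝ 1 U₁) (hU₁' : ZPeriodic U₁) (hU₂ : ContDiff ℝ 1 U₂) (hU₂' : ZPeriodic U₂)
    (hw₁ : IsWeakPoisson ε U₁ fun x => h₁ x - 1) (hw₂ : IsWeakPoisson ε U₂ fun x => h₂ x - 1)
    (hV₁ : ContDiff ℝ 2 V₁) (hV₁' : ZPeriodic V₁) (hV₂ : ContDiff ℝ 2 V₂) (hV₂' : ZPeriodic V₂)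
    (he₁ : ∀ x, ε ^ 2 * lap V₁ x = g (U₁ x + V₁ x))
    (he₂ : ∀ x, ε ^ 2 * lap V₂ x = g (U₂ x + V₂ x)) :
    ∫ x, euclNorm (grad V₁ x - grad V₂ x) ^ 2 ∂torusMeasure d ≤ stabilityConst d / ε ^ 4 *
      max (LpNorm ⊤ h₁) (LpNorm ⊤ h₂) * WassPow 2 (densMeasure h₁) (densMeasure h₂) := by
  have hgrad (x) : grad V₁ x - grad V₂ x = grad (V₁ - V₂) x := by
    ext i
    simp only [grad, Pi.sub_apply, fderiv_sub (hV₁.differentiable two_ne_zero x)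
      (hV₂.differentiable two_ne_zero x), sub_apply]
  simp only [hgrad, euclNorm_sq]
  exact (dirichletForm_sub_le_of_monotone hg hε hU₁ hU₁' hU₂ hU₂' hV₁ hV₁' hV₂ hV₂' he₁ he₂).trans
    (dirichletForm_sub_le_wassPow hε hh₁ hh₂ hU₁ hU₁' hU₂ hU₂' hw₁ hw₂)

end Stability

end Wasserstein

end Torus

lemma div_pow_four_le_exp_exp {K ε L : ℝ} (hK : 0 ≤ K) (hL : 0 ≤ L) :
    K / ε ^ 4 ≤ exp (exp ((K + 1) / ε ^ 2 * (1 + L))) := by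
  set y := (K + 1) / ε ^ 2 * (1 + L)
  have hle : (K + 1) / ε ^ 2 ≤ y := le_mul_of_one_le_right (by positivity) (by linarith)
  have hy : 0 ≤ y := by positivity
  calc K / ε ^ 4 ≤ (K + 1) ^ 2 / 2 / ε ^ 4 := by
        gcongr
        nlinarith [sq_nonneg K]
    _ = ((K + 1) / ε ^ 2) ^ 2 / 2 := by ring
    _ ≤ y ^ 2 / 2 := by gcongr
    _ ≤ exp y := by linarith [Real.quadratic_le_exp_of_nonneg hy]
    _ ≤ exp (exp y) := exp_le_exp.2 (by linarith [add_one_le_exp y])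

/-- Full stability estimate for the smooth parts of the potential in terms
of the Wasserstein distance of the densities. -/
theorem statement10 (d : ℕ) (hd : d = 2 ∨ d = 3) :
    ∃ C : ℝ, 0 < C ∧
      ∀ ε : ℝ, 0 < ε →
      ∀ h₁ h₂ Ubar₁ Ubar₂ Uhat₁ Uhat₂ : (Fin d → ℝ) → ℝ,
        Measurable h₁ → Measurable h₂ →
        ZPeriodic h₁ → ZPeriodic h₂ →
        (∀ x, 0 ≤ h₁ x) → (∀ x, 0 ≤ h₂ x) →
        (∫ x, h₁ x ∂(torusMeasure d)) = 1 → (∫ x, h₂ x ∂(torusMeasure d)) = 1 →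
        MemLp h₁ ⊤ (torusMeasure d) → MemLp h₂ ⊤ (torusMeasure d) →
        ContDiff ℝ 1 Ubar₁ → ContDiff ℝ 1 Ubar₂ →
        ZPeriodic Ubar₁ → ZPeriodic Ubar₂ →
        (∫ x, Ubar₁ x ∂(torusMeasure d)) = 0 → (∫ x, Ubar₂ x ∂(torusMeasure d)) = 0 →
        IsWeakPoisson ε Ubar₁ (fun x => h₁ x - 1) →
        IsWeakPoisson ε Ubar₂ (fun x => h₂ x - 1) →
        ContDiff ℝ 2 Uhat₁ → ContDiff ℝ 2 Uhat₂ →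
        ZPeriodic Uhat₁ → ZPeriodic Uhat₂ →
        (∀ x, ε ^ 2 * lap Uhat₁ x = Real.exp (Ubar₁ x + Uhat₁ x) - 1) →
        (∀ x, ε ^ 2 * lap Uhat₂ x = Real.exp (Ubar₂ x + Uhat₂ x) - 1) →
        (∫ x, euclNorm (grad Uhat₁ x - grad Uhat₂ x) ^ 2 ∂(torusMeasure d)) ≤
          Real.exp (Real.exp (C / ε ^ 2 *
              (1 + max (LpNorm (((d : ℝ≥0∞) + 2) / d) h₁)
                (LpNorm (((d : ℝ≥0∞) + 2) / d) h₂)))) *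
            max (LpNorm ⊤ h₁) (LpNorm ⊤ h₂) *
            WassPow 2 (densMeasure h₁) (densMeasure h₂) := by
  refine ⟨stabilityConst d + 1, by linarith [stabilityConst_nonneg (d := d)], ?_⟩
  intro ε hε h₁ h₂ U₁ U₂ V₁ V₂ _ _ _ _ hnn₁ hnn₂ hint₁ hint₂ hLp₁ hLp₂ hU₁ hU₂ hU₁' hU₂' _ _
    hw₁ hw₂ hV₁ hV₂ hV₁' hV₂' he₁ he₂
  have hmono : Monotone fun s => exp s - 1 := fun _ _ hst => sub_le_sub_right (exp_le_exp.2 hst) 1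
  refine (statement10_general hmono hε.ne' ⟨ae_of_all _ hnn₁, hint₁, hLp₁⟩
    ⟨ae_of_all _ hnn₂, hint₂, hLp₂⟩ hU₁ hU₁' hU₂ hU₂' hw₁ hw₂ hV₁ hV₁' hV₂ hV₂' he₁ he₂).trans ?_
  gcongr
  · exact wassPow_nonneg _ _ _
  · exact le_max_of_le_left ENNReal.toReal_nonneg
  · exact div_pow_four_le_exp_exp stabilityConst_nonneg
      (le_max_of_le_left ENNReal.toReal_nonneg)
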